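/- arXiv:2203.01258 — 4 statements merged into one kernel-verified Lean document; each statement's English description precedes it below -/
import Mathlib

section
/- Let k be a field of characteristic 2 and A = k[x,y]/(x^4, y^4), an Artinian Gorenstein algebra with Hilbert function (1,2,3,4,3,2,1) and socle degree 6. Then the multiplication map (x+y)^2: A_2 → A_4 is not of full rank; in particular this codimension two complete intersection is not almost strong Lefschetz in characteristic 2. -/
/- Common background: standard graded Artinian (Gorenstein) quotients of a
polynomial ring, their graded pieces, Hilbert function, socle degree,
Lefschetz-type conditions, and Macaulay contraction duality. -/

noncomputable section
open MvPolynomial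
open scoped Classical

variable {K : Type*} [Field K] {n : ℕ}

/-- The degree-`i` graded component of `R/I`: the image in the quotient of the
homogeneous polynomials of degree `i`. -/
def gradedPiece (I : Ideal (MvPolynomial (Fin n) K)) (i : ℕ) :
    Submodule K (MvPolynomial (Fin n) K ⧸ I) :=
  (homogeneousSubmodule (Fin n) K i).map (Ideal.Quotient.mkₐ K I).toLinearMap

/-- The Hilbert function of `R/I`. -/
def hilbFn (I : Ideal (MvPolynomial (Fin n) K)) (i : ℕ) : ℕ :=
  Module.finrank K (gradedPiece I i)

/-- `I` is a homogeneous ideal. -/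
def IsHomogIdeal (I : Ideal (MvPolynomial (Fin n) K)) : Prop :=
  ∀ p ∈ I, ∀ i, homogeneousComponent i p ∈ I

/-- The socle of `R/I`: elements killed by every variable. -/
def socleSub (I : Ideal (MvPolynomial (Fin n) K)) :
    Submodule K (MvPolynomial (Fin n) K ⧸ I) :=
  ⨅ v : Fin n, LinearMap.ker (LinearMap.mulLeft K (Ideal.Quotient.mk I (X v)))

/-- `R/I` is a standard graded Artinian Gorenstein algebra. -/
def IsAG (I : Ideal (MvPolynomial (Fin n) K)) : Prop :=
  IsHomogIdeal I ∧ I ≠ ⊤ ∧ FiniteDimensional K (MvPolynomial (Fin n) K ⧸ I) ∧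
    Module.finrank K (socleSub I) = 1

/-- The socle degree: the top degree with nonzero component. -/
def socDeg (I : Ideal (MvPolynomial (Fin n) K)) : ℕ :=
  sSup {i | hilbFn I i ≠ 0}

/-- Multiplication by `ℓ ^ d` maps `A_u` bijectively onto `A_v`. -/
def PowMulBij (I : Ideal (MvPolynomial (Fin n) K)) (ℓ : MvPolynomial (Fin n) K ⧸ I)
    (d u v : ℕ) : Prop :=
  (∀ a ∈ gradedPiece I u, ℓ ^ d * a = 0 → a = 0) ∧
  (∀ b ∈ gradedPiece I v, ∃ a ∈ gradedPiece I u, ℓ ^ d * a = b)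

/-- `(A, ℓ)` is a strong Lefschetz pair: `ℓ^(j-2i) : A_i → A_(j-i)` is bijective
for all `0 ≤ i ≤ ⌊j/2⌋`, `j` the socle degree. -/
def SLPair (I : Ideal (MvPolynomial (Fin n) K)) (ℓ : MvPolynomial (Fin n) K ⧸ I) : Prop :=
  ∀ i, 2 * i ≤ socDeg I → PowMulBij I ℓ (socDeg I - 2 * i) i (socDeg I - i)

/-- `A = R/I` has the strong Lefschetz property. -/
def StrongLefschetz (I : Ideal (MvPolynomial (Fin n) K)) : Prop :=
  ∃ ℓ ∈ gradedPiece I 1, SLPair I ℓ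

/-- Contraction of `F` by the monomial `x^d`. -/
def contractMon (d : Fin n →₀ ℕ) (F : MvPolynomial (Fin n) K) : MvPolynomial (Fin n) K :=
  ∑ e ∈ F.support, if d ≤ e then monomial (e - d) (coeff e F) else 0

/-- Contraction action of a polynomial `p` on `F` (Macaulay duality pairing). -/
def contract (p F : MvPolynomial (Fin n) K) : MvPolynomial (Fin n) K :=
  ∑ d ∈ p.support, coeff d p • contractMon d F

/-- `A = R/I` is almost strong Lefschetz: for some linear form `ℓ`, the maps
`ℓ^{j-2i} : A_i → A_{j-i}` are bijective for all `0 ≤ i ≤ ⌊j/2⌋` with `i ≠ 1`. -/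
def AlmostSL (I : Ideal (MvPolynomial (Fin n) K)) : Prop :=
  ∃ ℓ ∈ gradedPiece I 1, ∀ i, 2 * i ≤ socDeg I → i ≠ 1 →
    PowMulBij I ℓ (socDeg I - 2 * i) i (socDeg I - i)

/-- The sequence whose values are read off a finite list (zero beyond). -/
def listSeq (L : List ℕ) : ℕ → ℕ := fun i => L.getD i 0

/- In characteristic 2 the fourth power is additive, so `ℓ ^ 4 = 0` for every linear form `ℓ` of
`A = k[x,y]/(x⁴,y⁴)`. Hence `(x + y)²` is a nonzero element of `A_2` killed by `(x + y)²`.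
Moreover `A` has socle degree 6, and `ℓ ^ 6 : A_0 → A_6` is zero for every `ℓ`. -/

section MonomialIdeal

variable {σ R : Type*} [CommSemiring R] (S : Set (σ →₀ ℕ))

variable (R) in
/-- The monomial ideal generated by the monomials with exponent vector in `S`. It contains exactly
the monomials with exponent vector in `upperClosure S`, so the standard monomials, which give a
basis of the quotient, are those with exponent vector outside `upperClosure S`. -/
def monomialIdeal : Ideal (MvPolynomial σ R) :=
  Ideal.span ((fun s => monomial s 1) '' S)

theorem mem_monomialIdeal_iff_mem_restrictSupport {p : MvPolynomial σ R} :
    p ∈ monomialIdeal R S ↔ p ∈ restrictSupport R (upperClosure S : Set (σ →₀ ℕ)) :=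
  mem_ideal_span_monomial_image

theorem span_X_pow_pair_eq_monomialIdeal (a b : ℕ) :
    (Ideal.span {X 0 ^ a, X 1 ^ b} : Ideal (MvPolynomial (Fin 2) R)) =
      monomialIdeal R {Finsupp.single 0 a, Finsupp.single 1 b} := by
  simp only [monomialIdeal, Set.image_pair, X_pow_eq_monomial]

end MonomialIdeal

section MonomialQuotient

variable {σ R : Type*} [CommRing R] (S : Set (σ →₀ ℕ))

theorem injective_mk_domRestrict_restrictSupport {t : Set (σ →₀ ℕ)}
    (ht : Disjoint t (upperClosure S : Set (σ →₀ ℕ))) :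
    Function.Injective
      ((Ideal.Quotient.mkₐ R (monomialIdeal R S)).toLinearMap.domRestrict
        (restrictSupport R t)) := by
  rw [← LinearMap.ker_eq_bot, LinearMap.ker_eq_bot']
  rintro ⟨p, hp⟩ hzero
  have hI := (mem_monomialIdeal_iff_mem_restrictSupport S).1
    (Ideal.Quotient.eq_zero_iff_mem.1 hzero)
  have hsupport : (p.support : Set (σ →₀ ℕ)) ⊆ ∅ := ht hp hI
  exact Subtype.ext (support_eq_empty.1 (by simpa using hsupport))

theorem map_mk_restrictSupport_sdiff_upperClosure (t : Set (σ →₀ ℕ)) :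
    (restrictSupport R (t \ upperClosure S)).map
        (Ideal.Quotient.mkₐ R (monomialIdeal R S)).toLinearMap =
      (restrictSupport R t).map (Ideal.Quotient.mkₐ R (monomialIdeal R S)).toLinearMap := by
  refine le_antisymm (Submodule.map_mono (restrictSupport_mono R Set.sdiff_subset)) ?_
  rw [restrictSupport_eq_span R t, Submodule.map_span, Submodule.span_le]
  rintro _ ⟨_, ⟨d, hd, rfl⟩, rfl⟩
  by_cases hS : d ∈ upperClosure S
  · have hI : monomial d (1 : R) ∈ monomialIdeal R S :=
      (mem_monomialIdeal_iff_mem_restrictSupport S).2 fun e he => by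
        rwa [Finset.mem_singleton.1 (support_monomial_subset he)]
    have hzero := Ideal.Quotient.eq_zero_iff_mem.2 hI
    exact hzero ▸ Submodule.zero_mem _
  · refine Submodule.mem_map_of_mem ?_
    rw [restrictSupport_eq_span]
    exact Submodule.subset_span ⟨d, ⟨hd, hS⟩, rfl⟩

theorem gradedPiece_monomialIdeal (S : Set (Fin n →₀ ℕ)) (i : ℕ) :
    gradedPiece (monomialIdeal K S) i =
      (restrictSupport K ({d | d.degree = i} \ upperClosure S)).map
        (Ideal.Quotient.mkₐ K (monomialIdeal K S)).toLinearMap := by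
  rw [map_mk_restrictSupport_sdiff_upperClosure, gradedPiece,
    homogeneousSubmodule_eq_finsupp_supported, restrictSupport]

theorem hilbFn_monomialIdeal (S : Set (Fin n →₀ ℕ)) (i : ℕ) :
    hilbFn (monomialIdeal K S) i =
      ({d | d.degree = i} \ upperClosure S : Set (Fin n →₀ ℕ)).ncard := by
  rw [hilbFn, gradedPiece_monomialIdeal, ← LinearMap.range_domRestrict,
    LinearMap.finrank_range_of_inj
      (injective_mk_domRestrict_restrictSupport S Set.disjoint_sdiff_left),
    Module.finrank_eq_nat_card_basis (basisRestrictSupport K _), Nat.card_coe_set_eq]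

end MonomialQuotient

section TwoVariables

variable (K) in
theorem hilbFn_span_X_pow_pair (a b i : ℕ) :
    hilbFn (Ideal.span {X 0 ^ a, X 1 ^ b} : Ideal (MvPolynomial (Fin 2) K)) i =
      Finset.card {s ∈ Finset.HasAntidiagonal.antidiagonal i | s.1 < a ∧ s.2 < b} := by
  have hinj : Function.Injective fun d : Fin 2 →₀ ℕ => (d 0, d 1) := fun d e h => by
    ext j
    fin_cases j
    exacts [congrArg Prod.fst h, congrArg Prod.snd h]
  rw [span_X_pow_pair_eq_monomialIdeal, hilbFn_monomialIdeal, ← Set.ncard_image_of_injective _ hinj,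
    ← Set.ncard_coe_finset]
  congr 1
  ext ⟨u, v⟩
  simp only [Set.mem_image, Set.mem_sdiff, Set.mem_ofPred_eq, SetLike.mem_coe, mem_upperClosure,
    Set.mem_insert_iff, Set.mem_singleton_iff, exists_eq_or_imp, exists_eq_left,
    Finsupp.single_le_iff, Finsupp.degree_eq_sum, Fin.sum_univ_two, Prod.mk.injEq,
    Finset.coe_filter, Finset.HasAntidiagonal.mem_antidiagonal, not_or, not_le]
  constructor
  · rintro ⟨d, hd, rfl, rfl⟩
    exact hd
  · exact fun huv => ⟨Finsupp.equivFunOnFinite.symm ![u, v], by simpa using huv, by simp⟩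

variable (K) in
theorem socDeg_span_X_pow_succ_pair (a b : ℕ) :
    socDeg (Ideal.span {X 0 ^ (a + 1), X 1 ^ (b + 1)} : Ideal (MvPolynomial (Fin 2) K)) =
      a + b := by
  refine IsGreatest.csSup_eq ⟨?_, fun i hi => ?_⟩
  · rw [Set.mem_ofPred_eq, hilbFn_span_X_pow_pair, Finset.card_ne_zero]
    exact ⟨(a, b), by simp⟩
  · rw [Set.mem_ofPred_eq, hilbFn_span_X_pow_pair, Finset.card_ne_zero] at hi
    obtain ⟨s, hs⟩ := hi
    rw [Finset.mem_filter, Finset.HasAntidiagonal.mem_antidiagonal] at hs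
    omega

variable (K) in
theorem hilbFn_span_X_pow_four (i : ℕ) :
    hilbFn (Ideal.span {X 0 ^ 4, X 1 ^ 4} : Ideal (MvPolynomial (Fin 2) K)) i =
      listSeq [1, 2, 3, 4, 3, 2, 1] i := by
  rw [hilbFn_span_X_pow_pair]
  obtain hi | hi := lt_or_ge i 7
  · interval_cases i <;> decide
  · rw [listSeq, List.getD_eq_default _ _ hi, Finset.card_eq_zero, Finset.filter_eq_empty_iff]
    intro s hs
    rw [Finset.HasAntidiagonal.mem_antidiagonal] at hs
    omega

theorem X_add_X_pow_notMem_span_X_pow_pair {R : Type*} [CommSemiring R] [Nontrivial R]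
    {a b m : ℕ} (hm : m < a) (hb : b ≠ 0) :
    (X 0 + X 1 : MvPolynomial (Fin 2) R) ^ m ∉ Ideal.span {X 0 ^ a, X 1 ^ b} := by
  intro h
  obtain ⟨f, g, hfg⟩ := Ideal.mem_span_pair.1 h
  let setYZero : MvPolynomial (Fin 2) R →ₐ[R] Polynomial R := aeval ![Polynomial.X, 0]
  have hdvd : Polynomial.X ^ a ∣ (Polynomial.X ^ m : Polynomial R) :=
    Dvd.intro_left (setYZero f) (by simpa [setYZero, hb] using congrArg setYZero hfg)
  simpa using Polynomial.X_pow_dvd_iff.1 hdvd m hm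

end TwoVariables

section Lefschetz

theorem pow_mem_gradedPiece {I : Ideal (MvPolynomial (Fin n) K)} {i : ℕ}
    {ℓ : MvPolynomial (Fin n) K ⧸ I} (hℓ : ℓ ∈ gradedPiece I i) (m : ℕ) :
    ℓ ^ m ∈ gradedPiece I (i * m) := by
  obtain ⟨p, hp, rfl⟩ := hℓ
  exact ⟨p ^ m, hp.pow m, map_pow (Ideal.Quotient.mk I) p m⟩

theorem not_powMulBij_of_pow_add_eq_zero {I : Ideal (MvPolynomial (Fin n) K)}
    {ℓ : MvPolynomial (Fin n) K ⧸ I} {d u : ℕ} (hℓ : ℓ ∈ gradedPiece I 1)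
    (hne : ℓ ^ u ≠ 0) (hzero : ℓ ^ (d + u) = 0) (v : ℕ) : ¬ PowMulBij I ℓ d u v := fun h =>
  hne (h.1 _ (by simpa using pow_mem_gradedPiece hℓ u) (by rw [← pow_add, hzero]))

theorem not_almostSL_of_pow_socDeg_eq_zero {I : Ideal (MvPolynomial (Fin n) K)} (hI : I ≠ ⊤)
    (hzero : ∀ ℓ ∈ gradedPiece I 1, ℓ ^ socDeg I = 0) : ¬ AlmostSL I := by
  rintro ⟨ℓ, hℓ, hbij⟩
  have : Nontrivial (MvPolynomial (Fin n) K ⧸ I) := Ideal.Quotient.nontrivial_iff.2 hI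
  exact not_powMulBij_of_pow_add_eq_zero hℓ (by simp) (by simpa using hzero ℓ hℓ) _
    (hbij 0 (Nat.zero_le _) zero_ne_one)

theorem pow_expChar_pow_eq_zero_of_mem_gradedPiece_one (p e : ℕ) [ExpChar K p]
    {I : Ideal (MvPolynomial (Fin n) K)} (hI : ∀ j, X j ^ p ^ e ∈ I)
    {ℓ : MvPolynomial (Fin n) K ⧸ I} (hℓ : ℓ ∈ gradedPiece I 1) : ℓ ^ p ^ e = 0 := by
  obtain ⟨f, hf, rfl⟩ := hℓ
  suffices f ^ p ^ e ∈ I from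
    (map_pow (Ideal.Quotient.mk I) f _).symm.trans (Ideal.Quotient.eq_zero_iff_mem.2 this)
  rw [homogeneousSubmodule_one_eq_span_X] at hf
  induction hf using Submodule.span_induction with
  | mem _ hX => obtain ⟨j, rfl⟩ := hX; exact hI j
  | zero => rw [zero_pow (expChar_pow_pos K p e).ne']; exact I.zero_mem
  | add f g _ _ hf hg => rw [add_pow_expChar_pow]; exact I.add_mem hf hg
  | smul c f _ hf => rw [smul_pow]; exact Submodule.smul_of_tower_mem I _ hf

end Lefschetz

/-- over a field of characteristic 2, the Artinian Gorenstein algebra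
`A = k[x,y]/(x⁴,y⁴)`, of Hilbert function `(1,2,3,4,3,2,1)` and socle degree 6, has
`(x+y)² : A_2 → A_4` not of full rank (the two spaces have equal dimension 3, so
full rank means bijective); in particular `A` is not almost strong Lefschetz. -/
theorem stmt15 (hchar : ringChar K = 2) :
    (∀ i, hilbFn (Ideal.span {X 0 ^ 4, X 1 ^ 4} : Ideal (MvPolynomial (Fin 2) K)) i
        = listSeq [1, 2, 3, 4, 3, 2, 1] i) ∧
    ¬ PowMulBij (Ideal.span {X 0 ^ 4, X 1 ^ 4} : Ideal (MvPolynomial (Fin 2) K))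
        (Ideal.Quotient.mk _ (X 0 + X 1)) 2 2 4 ∧
    ¬ AlmostSL (Ideal.span {X 0 ^ 4, X 1 ^ 4} : Ideal (MvPolynomial (Fin 2) K)) := by
  have : CharP K 2 := ringChar.of_eq hchar
  set I : Ideal (MvPolynomial (Fin 2) K) := Ideal.span {X 0 ^ 4, X 1 ^ 4}
  have hfour : ∀ ℓ ∈ gradedPiece I 1, ℓ ^ 4 = 0 := fun ℓ hℓ =>
    pow_expChar_pow_eq_zero_of_mem_gradedPiece_one 2 2
      (fun j => Ideal.subset_span (by fin_cases j <;> simp)) hℓ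
  have hnotMem : ∀ m < 4, (X 0 + X 1) ^ m ∉ I := fun m hm =>
    X_add_X_pow_notMem_span_X_pow_pair hm four_ne_zero
  refine ⟨hilbFn_span_X_pow_four K, ?_, ?_⟩
  · have hlinear : Ideal.Quotient.mk I (X 0 + X 1) ∈ gradedPiece I 1 :=
      ⟨X 0 + X 1, (isHomogeneous_X K 0).add (isHomogeneous_X K 1), rfl⟩
    have hsq : Ideal.Quotient.mk I (X 0 + X 1) ^ 2 ≠ 0 := by
      rw [← map_pow, Ne, Ideal.Quotient.eq_zero_iff_mem]
      exact hnotMem 2 (by norm_num)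
    exact not_powMulBij_of_pow_add_eq_zero hlinear hsq (hfour _ hlinear) 4
  · have hproper : I ≠ ⊤ := (Ideal.ne_top_iff_one I).2 (by simpa using hnotMem 0 four_pos)
    have hsoc : socDeg I = 6 := socDeg_span_X_pow_succ_pair K 3 3
    refine not_almostSL_of_pow_socDeg_eq_zero hproper fun ℓ hℓ => ?_
    exact pow_eq_zero_of_le (by rw [hsoc]; norm_num) (hfour ℓ hℓ)
end
end

section
/- Let k be a field of characteristic 3 and A = k[x,y,z]/(x^3, y^3, z^4), an Artinian complete intersection with Hilbert function (1,3,6,8,8,6,3,1) and socle degree 7. Then the multiplication map (x+y+z)^3: A_2 → A_5 is not of full rank; in particular A is not almost strong Lefschetz. -/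
/- Common background: standard graded Artinian (Gorenstein) quotients of a
polynomial ring, their graded pieces, Hilbert function, socle degree,
Lefschetz-type conditions, and Macaulay contraction duality. -/

noncomputable section
open MvPolynomial
open scoped Classical

variable {K : Type*} [Field K] {n : ℕ}

/-!
In characteristic `p` the `q`-th power of a linear form, `q = p ^ e`, is a linear combination of the
`q`-th powers of the variables, by additivity of Frobenius. Hence every linear form `ℓ` satisfies
`ℓ ^ q * b = 0` as soon as `b` is killed by the `q`-th power of each variable. For `q = 3` and
`A = k[x,y,z]/(x³,y³,z⁴)` the nonzero class `b = z² ∈ A₂` is killed by `x³`, `y³` and `z³`, so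
`ℓ³ : A₂ → A₅` is never injective; since the socle degree is `7 = 3 + 2 * 2`, this is one of the
maps that the almost strong Lefschetz property requires to be bijective.
-/

section MonomialIdeal

variable (s : Set (Fin n →₀ ℕ)) (hs : IsUpperSet s) (i : ℕ)

theorem map_mkₐ_restrictSupport_eq_bot {t : Set (Fin n →₀ ℕ)} (hts : t ⊆ s) :
    (restrictSupport K t).map (Ideal.Quotient.mkₐ K (restrictSupportIdeal K s hs)).toLinearMap =
      ⊥ := by
  rw [Submodule.eq_bot_iff]
  rintro _ ⟨f, hf, rfl⟩
  exact Ideal.Quotient.eq_zero_iff_mem.mpr (restrictSupport_mono K hts hf)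

theorem gradedPiece_restrictSupportIdeal :
    gradedPiece (restrictSupportIdeal K s hs) i =
      (restrictSupport K ({d | d.degree = i} \ s)).map
        (Ideal.Quotient.mkₐ K (restrictSupportIdeal K s hs)).toLinearMap := by
  have hsplit : homogeneousSubmodule (Fin n) K i =
      restrictSupport K ({d | d.degree = i} \ s) ⊔ restrictSupport K ({d | d.degree = i} ∩ s) := by
    simp only [restrictSupport_eq_span]
    rw [← Submodule.span_union, ← Set.image_union, Set.sdiff_union_inter, ← restrictSupport_eq_span]
    exact homogeneousSubmodule_eq_finsupp_supported _ K i
  rw [gradedPiece, hsplit, Submodule.map_sup,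
    map_mkₐ_restrictSupport_eq_bot s hs Set.inter_subset_right, sup_bot_eq]

theorem disjoint_restrictSupport_ker_mkₐ {t : Set (Fin n →₀ ℕ)} (hts : Disjoint t s) :
    Disjoint (restrictSupport K t)
      (LinearMap.ker (Ideal.Quotient.mkₐ K (restrictSupportIdeal K s hs)).toLinearMap) := by
  rw [Submodule.disjoint_def]
  intro f hft hf
  have hfs : f ∈ restrictSupport K s := Ideal.Quotient.eq_zero_iff_mem.mp hf
  have hempty : (f.support : Set (Fin n →₀ ℕ)) ⊆ ∅ := hts hft hfs
  simpa using hempty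

theorem hilbFn_restrictSupportIdeal :
    hilbFn (restrictSupportIdeal K s hs) i =
      Nat.card ↥({d : Fin n →₀ ℕ | d.degree = i} \ s) := by
  have hdisj : Disjoint (restrictSupport K ({d | d.degree = i} \ s)) _ :=
    disjoint_restrictSupport_ker_mkₐ s hs Set.disjoint_sdiff_left
  rw [hilbFn, gradedPiece_restrictSupportIdeal, ← LinearMap.range_domRestrict,
    LinearMap.finrank_range_of_inj (LinearMap.injective_domRestrict_iff.mpr hdisj),
    Module.finrank_eq_nat_card_basis (basisRestrictSupport K _)]

end MonomialIdeal

/-- The ideal `(x₀ ^ a₀, …, xₙ₋₁ ^ aₙ₋₁)`, whose quotient is the monomial complete intersection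
with exponents `a`. -/
def powIdeal (K : Type*) [Field K] {n : ℕ} (a : Fin n → ℕ) : Ideal (MvPolynomial (Fin n) K) :=
  Ideal.span (Set.range fun j => X j ^ a j)

section PowIdeal

variable (a : Fin n → ℕ)

theorem isUpperSet_setOf_exists_le :
    IsUpperSet {d : Fin n →₀ ℕ | ∃ j, a j ≤ d j} :=
  fun _ _ hde ⟨j, hj⟩ => ⟨j, hj.trans (hde j)⟩

theorem powIdeal_eq_restrictSupportIdeal :
    powIdeal K a = restrictSupportIdeal K _ (isUpperSet_setOf_exists_le a) := by
  have hspan : powIdeal K a = Ideal.span ((fun e => monomial e (1 : K)) ''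
      Set.range fun j => Finsupp.single j (a j)) := by
    simp only [powIdeal, X_pow_eq_monomial, ← Set.range_comp, Function.comp_def]
  ext f
  rw [hspan, mem_ideal_span_monomial_image]
  simp only [Set.exists_range_iff, Finsupp.single_le_iff]
  rfl

theorem hilbFn_powIdeal (i : ℕ) :
    hilbFn (powIdeal K a) i =
      ((Finset.Nat.antidiagonalTuple n i).filter fun d => ∀ j, d j < a j).card := by
  rw [powIdeal_eq_restrictSupportIdeal, hilbFn_restrictSupportIdeal,
    Nat.card_congr (Finsupp.equivFunOnFinite.subtypeEquiv (q := fun d : Fin n → ℕ =>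
      ∑ j, d j = i ∧ ∀ j, d j < a j) fun d => ?_)]
  · exact Nat.subtype_card _ fun d => by
      rw [Finset.mem_filter, Finset.Nat.mem_antidiagonalTuple]
  · simp [Finsupp.degree_eq_sum]

variable {a}

theorem hilbFn_powIdeal_eq_zero {i : ℕ} (hi : ∑ j, (a j - 1) < i) :
    hilbFn (powIdeal K a) i = 0 := by
  rw [hilbFn_powIdeal, Finset.card_eq_zero, Finset.filter_eq_empty_iff]
  intro d hd hda
  rw [Finset.Nat.mem_antidiagonalTuple] at hd
  have hle : ∑ j, d j ≤ ∑ j, (a j - 1) := Finset.sum_le_sum fun j _ => Nat.le_sub_one_of_lt (hda j)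
  omega

theorem hilbFn_powIdeal_sum_sub_one_ne_zero (ha : ∀ j, 0 < a j) :
    hilbFn (powIdeal K a) (∑ j, (a j - 1)) ≠ 0 := by
  rw [hilbFn_powIdeal]
  refine Finset.card_ne_zero_of_mem (a := fun j => a j - 1) ?_
  simpa [Finset.Nat.mem_antidiagonalTuple] using ha

theorem socDeg_powIdeal (ha : ∀ j, 0 < a j) : socDeg (powIdeal K a) = ∑ j, (a j - 1) :=
  IsGreatest.csSup_eq ⟨hilbFn_powIdeal_sum_sub_one_ne_zero ha, fun _ hi =>
    not_lt.mp fun hlt => hi (hilbFn_powIdeal_eq_zero hlt)⟩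

theorem X_pow_mem_powIdeal {j : Fin n} {m : ℕ} (h : a j ≤ m) : X j ^ m ∈ powIdeal K a :=
  Ideal.pow_mem_of_pow_mem _ (Ideal.subset_span ⟨j, rfl⟩) h

theorem X_pow_notMem_powIdeal (ha : ∀ j, 0 < a j) {j : Fin n} {m : ℕ} (h : m < a j) :
    X j ^ m ∉ powIdeal K a := by
  rw [powIdeal_eq_restrictSupportIdeal, X_pow_eq_monomial]
  intro hmem
  obtain ⟨l, hl⟩ := (monomial_mem_restrictSupport K).mp hmem |>.resolve_right one_ne_zero
  obtain rfl | hne := eq_or_ne l j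
  · exact absurd hl (by simpa using h)
  · exact absurd hl (by simpa [hne] using (ha l).ne')

end PowIdeal

section Lefschetz

variable {I : Ideal (MvPolynomial (Fin n) K)}

theorem pow_mul_eq_zero_of_mem_gradedPiece_one (p e : ℕ) [ExpChar K p]
    {ℓ b : MvPolynomial (Fin n) K ⧸ I} (hℓ : ℓ ∈ gradedPiece I 1)
    (hb : ∀ j, Ideal.Quotient.mk I (X j) ^ p ^ e * b = 0) :
    ℓ ^ p ^ e * b = 0 := by
  obtain ⟨f, hf, rfl⟩ := hℓ
  rw [SetLike.mem_coe, homogeneousSubmodule_one_eq_span_X,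
    Submodule.mem_span_range_iff_exists_fun] at hf
  obtain ⟨c, rfl⟩ := hf
  have hfrob : (∑ j, c j • X j : MvPolynomial (Fin n) K) ^ p ^ e =
      ∑ j, c j ^ p ^ e • X j ^ p ^ e := by
    simp only [sum_pow_char_pow, smul_pow]
  rw [AlgHom.toLinearMap_apply, ← map_pow, hfrob, map_sum, Finset.sum_mul]
  refine Finset.sum_eq_zero fun j _ => ?_
  rw [map_smul, map_pow, smul_mul_assoc, Ideal.Quotient.mkₐ_eq_mk, hb, smul_zero]

theorem not_powMulBij_powIdeal (p e : ℕ) [ExpChar K p] {a : Fin n → ℕ} (ha : ∀ j, 0 < a j)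
    {i : Fin n} {m : ℕ} (hm : m < a i) (hi : a i ≤ p ^ e + m) (hne : ∀ j ≠ i, a j ≤ p ^ e)
    {ℓ : MvPolynomial (Fin n) K ⧸ powIdeal K a} (hℓ : ℓ ∈ gradedPiece (powIdeal K a) 1) (v : ℕ) :
    ¬ PowMulBij (powIdeal K a) ℓ (p ^ e) m v := by
  intro h
  have hkill (j : Fin n) : X j ^ p ^ e * X i ^ m ∈ powIdeal K a := by
    obtain rfl | hj := eq_or_ne j i
    · exact pow_add (X j : MvPolynomial (Fin n) K) _ _ ▸ X_pow_mem_powIdeal hi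
    · exact Ideal.mul_mem_right _ _ (X_pow_mem_powIdeal (hne j hj))
  have hzero : ℓ ^ p ^ e * Ideal.Quotient.mk _ (X i ^ m) = 0 :=
    pow_mul_eq_zero_of_mem_gradedPiece_one p e hℓ fun j => by
      rw [← map_pow, ← map_mul, Ideal.Quotient.eq_zero_iff_mem]
      exact hkill j
  exact X_pow_notMem_powIdeal (K := K) ha hm
    (Ideal.Quotient.eq_zero_iff_mem.mp (h.1 _ ⟨X i ^ m, isHomogeneous_X_pow i m, rfl⟩ hzero))

theorem AlmostSL.exists_powMulBij (h : AlmostSL I) {d u : ℕ} (hu : u ≠ 1)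
    (hsoc : socDeg I = d + 2 * u) : ∃ ℓ ∈ gradedPiece I 1, PowMulBij I ℓ d u (d + u) := by
  obtain ⟨ℓ, hℓ, hbij⟩ := h
  have hu_bij := hbij u (by omega) hu
  rw [show socDeg I - 2 * u = d by omega, show socDeg I - u = d + u by omega] at hu_bij
  exact ⟨ℓ, hℓ, hu_bij⟩

end Lefschetz

theorem span_triple_X_pow (a b c : ℕ) :
    (Ideal.span {X 0 ^ a, X 1 ^ b, X 2 ^ c} : Ideal (MvPolynomial (Fin 3) K)) =
      powIdeal K ![a, b, c] := by
  rw [powIdeal]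
  congr 1
  ext f
  simp [Fin.exists_fin_succ, eq_comm]

theorem hilbFn_powIdeal_three_three_four (i : ℕ) :
    hilbFn (powIdeal K ![3, 3, 4]) i = listSeq [1, 3, 6, 8, 8, 6, 3, 1] i := by
  obtain hi | hi := lt_or_ge i 8
  · rw [hilbFn_powIdeal]
    interval_cases i <;> decide
  · rw [hilbFn_powIdeal_eq_zero (lt_of_lt_of_le (by decide) hi), listSeq,
      List.getD_eq_default _ _ hi]

/-- over a field of characteristic 3, the Artinian complete
intersection `A = k[x,y,z]/(x³,y³,z⁴)`, of Hilbert function `(1,3,6,8,8,6,3,1)` and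
socle degree 7, has `(x+y+z)³ : A_2 → A_5` not of full rank (both spaces have
dimension 6, so full rank means bijective); in particular `A` is not almost strong
Lefschetz. -/
theorem stmt16 (hchar : ringChar K = 3) :
    (∀ i, hilbFn (Ideal.span {X 0 ^ 3, X 1 ^ 3, X 2 ^ 4} : Ideal (MvPolynomial (Fin 3) K)) i
        = listSeq [1, 3, 6, 8, 8, 6, 3, 1] i) ∧
    ¬ PowMulBij (Ideal.span {X 0 ^ 3, X 1 ^ 3, X 2 ^ 4} : Ideal (MvPolynomial (Fin 3) K))
        (Ideal.Quotient.mk _ (X 0 + X 1 + X 2)) 3 2 5 ∧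
    ¬ AlmostSL (Ideal.span {X 0 ^ 3, X 1 ^ 3, X 2 ^ 4} : Ideal (MvPolynomial (Fin 3) K)) := by
  have : CharP K 3 := ringChar.of_eq hchar
  have hpos : ∀ j : Fin 3, 0 < ![3, 3, 4] j := by decide
  have hle : ∀ j : Fin 3, j ≠ 2 → ![3, 3, 4] j ≤ 3 ^ 1 := by decide
  have hnot {ℓ : MvPolynomial (Fin 3) K ⧸ powIdeal K ![3, 3, 4]}
      (hℓ : ℓ ∈ gradedPiece (powIdeal K ![3, 3, 4]) 1) :
      ¬ PowMulBij (powIdeal K ![3, 3, 4]) ℓ 3 2 5 :=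
    not_powMulBij_powIdeal 3 1 hpos (i := 2) (by decide) (by decide) hle hℓ 5
  rw [span_triple_X_pow]
  refine ⟨hilbFn_powIdeal_three_three_four, hnot ⟨_, ?_, rfl⟩, fun h => ?_⟩
  · exact ((isHomogeneous_X K 0).add (isHomogeneous_X K 1)).add (isHomogeneous_X K 2)
  · have hsoc : socDeg (powIdeal K ![3, 3, 4]) = 3 + 2 * 2 := socDeg_powIdeal hpos
    obtain ⟨ℓ, hℓ, hbij⟩ := h.exists_powMulBij (by decide) hsoc
    exact hnot hℓ hbij
end
end

section
/- Assume char k = 0 and let T be a codimension three Gorenstein sequence. Then the subset of the (irreducible) parameter variety Gor(T) consisting of strong Lefschetz Artinian Gorenstein algebras is a nonempty Zariski open (hence dense) subset; i.e., a general codimension three Artinian Gorenstein algebra of Hilbert function T is strong Lefschetz. -/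
/- Common background: standard graded Artinian (Gorenstein) quotients of a
polynomial ring, their graded pieces, Hilbert function, socle degree,
Lefschetz-type conditions, and Macaulay contraction duality. -/

noncomputable section
open MvPolynomial
open scoped Classical

variable {K : Type*} [Field K] {n : ℕ}

/- Let `φ` be the functional on `R` that reads off the socle of `A = R/I`, and `j` the socle degree.
Then `I` is recovered from the pairing `(p, q) ↦ φ (p * q)`, and multiplication by `ℓ ^ (j - 2 i)`
from `A_i` to `A_(j - i)` is bijective as soon as the Gram determinant of
`(p, q) ↦ φ (ℓ ^ (j - 2 i) * p * q)` on some `dim A_i` forms of degree `i` is nonzero. These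
determinants are polynomials in the coefficients of the dual generator, so the point is to find a
family of forms and a dual generator with the given Hilbert function `T` at which none of them
vanishes.

Let `f` be a relation of least degree, and cut `A` by a line through a point off the curve `f = 0`.
Comparing the Hilbert functions of `A` and of this section shows (Stanley) that the first difference
of the first half of `T` is the Hilbert function of a lower set `M` of monomials in two variables.
Place a node of the plane at each exponent in `M`, and let `φ` be a weighted sum of the evaluations
at these nodes. The Newton interpolation forms with exponents outside `M` vanish at all the nodes,
which bounds the Hilbert function of `φ` from above. Let `ℓ` be the linear form equal to `1` at
every node. If the weights of the nodes of degree at most `i` are `1` and the others are `0`, the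
`i`-th Gram matrix in the Newton forms is `V * Vᵀ` with `V` triangular and invertible; hence for a
general choice of weights all the Gram determinants are nonzero, and the upper bound is attained. -/

section HomogeneousIdeals

attribute [local instance] MvPolynomial.gradedAlgebra

theorem coe_decompose_homogeneousSubmodule (p : MvPolynomial (Fin n) K) (i : ℕ) :
    (DirectSum.decompose (homogeneousSubmodule (Fin n) K) p i : MvPolynomial (Fin n) K) =
      homogeneousComponent i p := decomposition.decompose'_apply p i

theorem homogeneousComponent_add_mul {i : ℕ} {p : MvPolynomial (Fin n) K}
    (hp : p.IsHomogeneous i) (k : ℕ) (r : MvPolynomial (Fin n) K) :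
    homogeneousComponent (i + k) (p * r) = p * homogeneousComponent k r := by
  simpa only [coe_decompose_homogeneousSubmodule] using
    DirectSum.coe_decompose_mul_add_of_left_mem (homogeneousSubmodule (Fin n) K) hp

theorem homogeneousComponent_mul_eq_zero_of_lt {i j : ℕ} (hij : j < i)
    {p : MvPolynomial (Fin n) K} (hp : p.IsHomogeneous i) (r : MvPolynomial (Fin n) K) :
    homogeneousComponent j (p * r) = 0 := by
  simpa only [coe_decompose_homogeneousSubmodule] using
    DirectSum.coe_decompose_mul_of_left_mem_of_not_le (homogeneousSubmodule (Fin n) K) hp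
      (not_le.2 hij)

theorem isHomogIdeal_iff_isHomogeneous {I : Ideal (MvPolynomial (Fin n) K)} :
    IsHomogIdeal I ↔ I.IsHomogeneous (homogeneousSubmodule (Fin n) K) := by
  simp only [IsHomogIdeal, ← coe_decompose_homogeneousSubmodule]
  exact ⟨fun h i p hp => h p hp i, fun h p hp i => h i hp⟩

theorem IsHomogIdeal.sup_span_singleton {I : Ideal (MvPolynomial (Fin n) K)}
    (hI : IsHomogIdeal I) {i : ℕ} {f : MvPolynomial (Fin n) K} (hf : f.IsHomogeneous i) :
    IsHomogIdeal (I ⊔ Ideal.span {f}) := by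
  rw [isHomogIdeal_iff_isHomogeneous] at hI ⊢
  refine hI.sup (Ideal.homogeneous_span _ _ ?_)
  rintro _ rfl
  exact ⟨i, hf⟩

theorem IsHomogIdeal.mem_iff {I : Ideal (MvPolynomial (Fin n) K)} (hI : IsHomogIdeal I)
    {p : MvPolynomial (Fin n) K} : p ∈ I ↔ ∀ i, homogeneousComponent i p ∈ I :=
  mem_iff_homogeneousComponent_mem (isHomogIdeal_iff_isHomogeneous.1 hI) p

theorem IsHomogIdeal.ext {I J : Ideal (MvPolynomial (Fin n) K)} (hI : IsHomogIdeal I)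
    (hJ : IsHomogIdeal J)
    (h : ∀ (i : ℕ) (p : MvPolynomial (Fin n) K), p.IsHomogeneous i → (p ∈ I ↔ p ∈ J)) :
    I = J := by
  ext p
  rw [hI.mem_iff, hJ.mem_iff]
  exact forall_congr' fun i => h i _ (homogeneousComponent_isHomogeneous i p)

end HomogeneousIdeals

section HilbertFunction

instance finiteDimensional_homogeneousSubmodule (i : ℕ) :
    FiniteDimensional K (homogeneousSubmodule (Fin n) K i) :=
  Module.Finite.iff_fg.mpr (homogeneousSubmodule_fg (Fin n) K i)

instance finiteDimensional_gradedPiece (I : Ideal (MvPolynomial (Fin n) K)) (i : ℕ) :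
    FiniteDimensional K (gradedPiece I i) := by
  unfold gradedPiece
  infer_instance

theorem mem_gradedPiece {I : Ideal (MvPolynomial (Fin n) K)} {i : ℕ}
    {a : MvPolynomial (Fin n) K ⧸ I} :
    a ∈ gradedPiece I i ↔
      ∃ p : MvPolynomial (Fin n) K, p.IsHomogeneous i ∧ Ideal.Quotient.mk I p = a := Iff.rfl

theorem mk_mem_gradedPiece (I : Ideal (MvPolynomial (Fin n) K)) {i : ℕ}
    {p : MvPolynomial (Fin n) K} (hp : p.IsHomogeneous i) :
    Ideal.Quotient.mk I p ∈ gradedPiece I i := mem_gradedPiece.2 ⟨p, hp, rfl⟩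

theorem hilbFn_eq_finrank_range {W : Type*} [AddCommGroup W] [Module K W]
    {I : Ideal (MvPolynomial (Fin n) K)} {i : ℕ} (f : homogeneousSubmodule (Fin n) K i →ₗ[K] W)
    (hf : ∀ p, f p = 0 ↔ (p : MvPolynomial (Fin n) K) ∈ I) :
    hilbFn I i = Module.finrank K (LinearMap.range f) := by
  set g := (Ideal.Quotient.mkₐ K I).toLinearMap.domRestrict (homogeneousSubmodule (Fin n) K i)
  have hker : LinearMap.ker g = LinearMap.ker f :=
    Submodule.ext fun p => Ideal.Quotient.eq_zero_iff_mem.trans (hf p).symm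
  have hrange : LinearMap.range g = gradedPiece I i := LinearMap.range_domRestrict _ _
  rw [hilbFn, ← hrange]
  exact (g.quotKerEquivRange.symm ≪≫ₗ Submodule.quotEquivOfEq _ _ hker ≪≫ₗ
    f.quotKerEquivRange).finrank_eq

theorem hilbFn_eq_zero_iff {I : Ideal (MvPolynomial (Fin n) K)} {i : ℕ} :
    hilbFn I i = 0 ↔ ∀ p : MvPolynomial (Fin n) K, p.IsHomogeneous i → p ∈ I := by
  rw [hilbFn, Submodule.finrank_eq_zero, Submodule.eq_bot_iff]
  constructor
  · exact fun h p hp => Ideal.Quotient.eq_zero_iff_mem.1 (h _ (mk_mem_gradedPiece I hp))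
  · rintro h _ ⟨p, hp, rfl⟩
    exact Ideal.Quotient.eq_zero_iff_mem.2 (h p hp)

theorem hilbFn_eq_finrank_homogeneousSubmodule {I : Ideal (MvPolynomial (Fin n) K)} {i : ℕ}
    (hI : ∀ p ∈ I, p.IsHomogeneous i → p = 0) :
    hilbFn I i = Module.finrank K (homogeneousSubmodule (Fin n) K i) := by
  rw [hilbFn_eq_finrank_range LinearMap.id, LinearMap.range_id, finrank_top]
  exact fun p => ⟨fun h => by simp [show p = 0 from h], fun h => Subtype.ext (hI p h p.2)⟩

theorem hilbFn_antitone {I J : Ideal (MvPolynomial (Fin n) K)} (hIJ : I ≤ J) (i : ℕ) :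
    hilbFn J i ≤ hilbFn I i := by
  have h : gradedPiece J i = (gradedPiece I i).map (Ideal.Quotient.factorₐ K hIJ).toLinearMap := by
    rw [gradedPiece, gradedPiece, ← Submodule.map_comp]
    rfl
  rw [hilbFn, h]
  exact Submodule.finrank_map_le _ _

theorem finrank_homogeneousSubmodule (i : ℕ) :
    Module.finrank K (homogeneousSubmodule (Fin n) K i) = (n + i - 1).choose i := by
  have h : homogeneousSubmodule (Fin n) K i =
      restrictSupport K (Finset.finsuppAntidiag (Finset.univ : Finset (Fin n)) i : Set _) := by
    rw [homogeneousSubmodule_eq_finsupp_supported]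
    congr 1
    ext d
    simp [Finset.mem_finsuppAntidiag, Finsupp.degree_eq_sum]
  rw [h, Module.finrank_eq_card_basis (basisRestrictSupport K _)]
  simp [Finset.card_finsuppAntidiag_nat_eq_choose]

theorem finrank_homogeneousSubmodule_succ (i : ℕ) :
    Module.finrank K (homogeneousSubmodule (Fin 3) K (i + 1)) =
      Module.finrank K (homogeneousSubmodule (Fin 3) K i) + (i + 2) := by
  rw [finrank_homogeneousSubmodule, finrank_homogeneousSubmodule,
    show 3 + (i + 1) - 1 = i + 2 + 1 by omega, show 3 + i - 1 = i + 2 by omega,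
    Nat.choose_succ_succ, Nat.choose_succ_self_right]

theorem finrank_homogeneousSubmodule_eq_sum (i : ℕ) :
    Module.finrank K (homogeneousSubmodule (Fin 3) K i) = ∑ k ∈ Finset.range (i + 1), (k + 1) := by
  induction i with
  | zero => simp [finrank_homogeneousSubmodule]
  | succ i ih => rw [finrank_homogeneousSubmodule_succ, ih, Finset.sum_range_succ _ (i + 1)]

theorem hilbFn_zero_le_one (I : Ideal (MvPolynomial (Fin n) K)) : hilbFn I 0 ≤ 1 := by
  have h : Module.finrank K (homogeneousSubmodule (Fin n) K 0) = 1 := by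
    rw [finrank_homogeneousSubmodule, Nat.choose_zero_right]
  exact (Submodule.finrank_map_le _ _).trans_eq h

theorem socDeg_congr {I J : Ideal (MvPolynomial (Fin n) K)} (h : ∀ i, hilbFn I i = hilbFn J i) :
    socDeg I = socDeg J := by
  simp only [socDeg, h]

theorem IsHomogIdeal.iSupIndep_gradedPiece {I : Ideal (MvPolynomial (Fin n) K)}
    (hI : IsHomogIdeal I) : iSupIndep (gradedPiece I) := by
  rw [iSupIndep_iff_finsetSum_eq_zero_imp_eq_zero]
  intro s a ha hsum i hi
  choose! p hp hpa using fun i hi => mem_gradedPiece.1 (ha i hi)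
  have hmem : ∑ i ∈ s, p i ∈ I := by
    rw [← Ideal.Quotient.eq_zero_iff_mem, map_sum, Finset.sum_congr rfl hpa, hsum]
  have hcomp : homogeneousComponent i (∑ k ∈ s, p k) = p i := by
    rw [map_sum, Finset.sum_congr rfl fun k hk => homogeneousComponent_of_mem (hp k hk),
      Finset.sum_ite_eq, if_pos hi]
  rw [← hpa i hi, Ideal.Quotient.eq_zero_iff_mem, ← hcomp]
  exact hI _ hmem i

theorem IsHomogIdeal.finite_support_hilbFn {I : Ideal (MvPolynomial (Fin n) K)}
    (hI : IsHomogIdeal I) [FiniteDimensional K (MvPolynomial (Fin n) K ⧸ I)] :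
    {i | hilbFn I i ≠ 0}.Finite := by
  simpa only [hilbFn, ne_eq, Submodule.finrank_eq_zero] using
    WellFoundedGT.finite_ne_bot_of_iSupIndep hI.iSupIndep_gradedPiece

end HilbertFunction

section MacaulayDuality

/-- The functional `φ` is concentrated in degree `j`: it sees only the component of degree `j`.
Such functionals are the dual generators of Macaulay's correspondence. -/
def IsConcentrated (φ : MvPolynomial (Fin n) K →ₗ[K] K) (j : ℕ) : Prop :=
  ∀ p, φ (homogeneousComponent j p) = φ p

/-- The largest ideal contained in the kernel of `φ`, i.e. the annihilator of `φ` in the module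
dual to the polynomial ring. -/
def annIdeal (φ : MvPolynomial (Fin n) K →ₗ[K] K) : Ideal (MvPolynomial (Fin n) K) where
  carrier := {p | ∀ r, φ (p * r) = 0}
  add_mem' hp hq r := by rw [add_mul, map_add, hp r, hq r, add_zero]
  zero_mem' r := by rw [zero_mul, map_zero]
  smul_mem' c p hp r := by rw [smul_eq_mul, mul_comm c p, mul_assoc, hp]

variable {φ : MvPolynomial (Fin n) K →ₗ[K] K} {i j k : ℕ} {p : MvPolynomial (Fin n) K}

theorem mem_annIdeal : p ∈ annIdeal φ ↔ ∀ r, φ (p * r) = 0 := Iff.rfl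

theorem IsConcentrated.mem_annIdeal_iff (hφ : IsConcentrated φ j) (hik : i + k = j)
    (hp : p.IsHomogeneous i) :
    p ∈ annIdeal φ ↔ ∀ r : MvPolynomial (Fin n) K, r.IsHomogeneous k → φ (p * r) = 0 := by
  refine ⟨fun h r _ => h r, fun h r => ?_⟩
  rw [← hφ, ← hik, homogeneousComponent_add_mul hp]
  exact h _ (homogeneousComponent_isHomogeneous k r)

theorem IsConcentrated.mem_annIdeal_of_lt (hφ : IsConcentrated φ j) (hij : j < i)
    (hp : p.IsHomogeneous i) : p ∈ annIdeal φ := fun r => by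
  rw [← hφ, homogeneousComponent_mul_eq_zero_of_lt hij hp, map_zero]

theorem IsConcentrated.isHomogIdeal_annIdeal (hφ : IsConcentrated φ j) :
    IsHomogIdeal (annIdeal φ) := by
  intro p hp i
  have hpi := homogeneousComponent_isHomogeneous i p
  rcases lt_or_ge j i with hij | hij
  · exact hφ.mem_annIdeal_of_lt hij hpi
  · obtain ⟨k, rfl⟩ := Nat.exists_eq_add_of_le' hij
    refine (hφ.mem_annIdeal_iff (add_comm i k) hpi).2 fun r hr => ?_
    rw [mul_comm, ← homogeneousComponent_add_mul hr, hφ, mul_comm]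
    exact hp r

theorem annIdeal_colon_singleton (φ : MvPolynomial (Fin n) K →ₗ[K] K)
    (ℓ : MvPolynomial (Fin n) K) :
    (annIdeal φ).colon {ℓ} = annIdeal (φ ∘ₗ LinearMap.mulLeft K ℓ) := by
  ext p
  simp only [Submodule.mem_colon_singleton, mem_annIdeal, smul_eq_mul, LinearMap.comp_apply,
    LinearMap.mulLeft_apply, mul_left_comm ℓ p, mul_assoc]

theorem IsConcentrated.comp_mulLeft (hφ : IsConcentrated φ (i + k)) (hp : p.IsHomogeneous i) :
    IsConcentrated (φ ∘ₗ LinearMap.mulLeft K p) k := fun r => by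
  simp only [LinearMap.comp_apply, LinearMap.mulLeft_apply]
  rw [← homogeneousComponent_add_mul hp, hφ]

theorem IsConcentrated.hilbFn_eq_zero (hφ : IsConcentrated φ j) (hij : j < i) :
    hilbFn (annIdeal φ) i = 0 :=
  hilbFn_eq_zero_iff.2 fun _ => hφ.mem_annIdeal_of_lt hij

/-- The pairing `R_i × R_k → K`, `(p, r) ↦ φ (p * r)`, whose rank is a value of the Hilbert
function of `R ⧸ annIdeal φ`. -/
def gradedPairing (φ : MvPolynomial (Fin n) K →ₗ[K] K) (i k : ℕ) :
    homogeneousSubmodule (Fin n) K i →ₗ[K] homogeneousSubmodule (Fin n) K k →ₗ[K] K :=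
  ((LinearMap.mul K (MvPolynomial (Fin n) K)).compr₂ φ).domRestrict₁₂ _ _

theorem flip_gradedPairing (φ : MvPolynomial (Fin n) K →ₗ[K] K) (i k : ℕ) :
    (gradedPairing φ i k).flip = gradedPairing φ k i := by
  ext x y
  exact congrArg φ (mul_comm _ _)

theorem IsConcentrated.hilbFn_eq_finrank_range (hφ : IsConcentrated φ j) (hik : i + k = j) :
    hilbFn (annIdeal φ) i = Module.finrank K (LinearMap.range (gradedPairing φ i k)) := by
  refine _root_.hilbFn_eq_finrank_range _ fun p => ?_
  rw [hφ.mem_annIdeal_iff hik p.2]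
  exact ⟨fun h r hr => LinearMap.congr_fun h ⟨r, hr⟩, fun h => LinearMap.ext fun r => h r r.2⟩

theorem finrank_range_flip_le {V W : Type*} [AddCommGroup V] [Module K V]
    [AddCommGroup W] [Module K W] [FiniteDimensional K V] (B : V →ₗ[K] W →ₗ[K] K) :
    Module.finrank K (LinearMap.range B.flip) ≤ Module.finrank K (LinearMap.range B) := by
  have h : B.flip = B.dualMap ∘ₗ Module.Dual.eval K W := rfl
  rw [← LinearMap.finrank_range_dualMap_eq_finrank_range B, h]
  exact Submodule.finrank_mono (LinearMap.range_comp_le_range _ _)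

theorem IsConcentrated.hilbFn_symm (hφ : IsConcentrated φ j) (hik : i + k = j) :
    hilbFn (annIdeal φ) i = hilbFn (annIdeal φ) k := by
  have hki : k + i = j := (add_comm k i).trans hik
  rw [hφ.hilbFn_eq_finrank_range hik, hφ.hilbFn_eq_finrank_range hki]
  apply le_antisymm
  · rw [← flip_gradedPairing]
    exact finrank_range_flip_le _
  · rw [← flip_gradedPairing]
    exact finrank_range_flip_le _

theorem IsConcentrated.hilbFn_eq_of_forall_two_mul_le {ψ : MvPolynomial (Fin n) K →ₗ[K] K}
    (hφ : IsConcentrated φ j) (hψ : IsConcentrated ψ j)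
    (h : ∀ i, 2 * i ≤ j → hilbFn (annIdeal φ) i = hilbFn (annIdeal ψ) i) (i : ℕ) :
    hilbFn (annIdeal φ) i = hilbFn (annIdeal ψ) i := by
  rcases lt_or_ge j i with hij | hij
  · rw [hφ.hilbFn_eq_zero hij, hψ.hilbFn_eq_zero hij]
  rcases le_or_gt (2 * i) j with hi | hi
  · exact h i hi
  · have hik : i + (j - i) = j := by omega
    rw [hφ.hilbFn_symm hik, hψ.hilbFn_symm hik]
    exact h _ (by omega)

variable {I : Ideal (MvPolynomial (Fin n) K)}

theorem IsAG.one_notMem (hI : IsAG I) : 1 ∉ I := (Ideal.ne_top_iff_one I).1 hI.2.1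

theorem IsAG.finite_support_hilbFn (hI : IsAG I) : {i | hilbFn I i ≠ 0}.Finite :=
  have := hI.2.2.1
  hI.1.finite_support_hilbFn

theorem IsAG.hilbFn_zero (hI : IsAG I) : hilbFn I 0 = 1 := by
  refine le_antisymm (hilbFn_zero_le_one I) (Nat.one_le_iff_ne_zero.2 fun h => ?_)
  exact hI.one_notMem (hilbFn_eq_zero_iff.1 h 1 (isHomogeneous_one _ _))

theorem IsAG.hilbFn_socDeg_ne_zero (hI : IsAG I) : hilbFn I (socDeg I) ≠ 0 :=
  Nat.sSup_mem (s := {i | hilbFn I i ≠ 0}) ⟨0, by simp [hI.hilbFn_zero]⟩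
    hI.finite_support_hilbFn.bddAbove

theorem IsAG.mem_of_socDeg_lt (hI : IsAG I) (hi : socDeg I < i) (hp : p.IsHomogeneous i) :
    p ∈ I := by
  refine hilbFn_eq_zero_iff.1 ?_ p hp
  by_contra h
  exact hi.not_ge (le_csSup hI.finite_support_hilbFn.bddAbove h)

theorem mk_mem_socleSub_iff : Ideal.Quotient.mk I p ∈ socleSub I ↔ ∀ v, X v * p ∈ I := by
  simp only [socleSub, Submodule.mem_iInf, LinearMap.mem_ker, LinearMap.mulLeft_apply, ← map_mul,
    Ideal.Quotient.eq_zero_iff_mem]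

theorem IsAG.gradedPiece_socDeg (hI : IsAG I) : gradedPiece I (socDeg I) = socleSub I := by
  have := hI.2.2.1
  refine Submodule.eq_of_le_of_finrank_le ?_ ?_
  · rintro _ ⟨p, hp, rfl⟩
    exact mk_mem_socleSub_iff.2 fun v =>
      hI.mem_of_socDeg_lt (by omega) ((isHomogeneous_X K v).mul hp)
  · rw [hI.2.2.2]
    exact Nat.one_le_iff_ne_zero.2 hI.hilbFn_socDeg_ne_zero

theorem IsAG.exists_X_mul_notMem (hI : IsAG I) (hi : i < socDeg I) (hp : p.IsHomogeneous i)
    (hpI : p ∉ I) : ∃ v, X v * p ∉ I := by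
  by_contra! h
  obtain ⟨q, hq, hqp⟩ :=
    mem_gradedPiece.1 (hI.gradedPiece_socDeg ▸ mk_mem_socleSub_iff.2 h)
  have hcomp := hI.1 _ (Ideal.Quotient.eq.1 hqp) i
  rw [map_sub, homogeneousComponent_eq_self hp, homogeneousComponent_of_mem hq,
    if_neg hi.ne, zero_sub, neg_mem_iff] at hcomp
  exact hpI hcomp

theorem IsAG.exists_mul_notMem (hI : IsAG I) (hik : i + k = socDeg I) (hp : p.IsHomogeneous i)
    (hpI : p ∉ I) : ∃ r : MvPolynomial (Fin n) K, r.IsHomogeneous k ∧ p * r ∉ I := by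
  induction k generalizing i p with
  | zero => exact ⟨1, isHomogeneous_one _ _, by rwa [mul_one]⟩
  | succ k ih =>
    obtain ⟨v, hv⟩ := hI.exists_X_mul_notMem (by omega) hp hpI
    obtain ⟨r, hr, hrI⟩ := ih (by omega) ((isHomogeneous_X K v).mul hp) hv
    refine ⟨X v * r, add_comm 1 k ▸ (isHomogeneous_X K v).mul hr, ?_⟩
    rwa [← mul_assoc, mul_comm p]

theorem IsAG.exists_isConcentrated (hI : IsAG I) :
    ∃ φ : MvPolynomial (Fin n) K →ₗ[K] K, IsConcentrated φ (socDeg I) ∧ (∀ p ∈ I, φ p = 0) ∧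
      ∀ p : MvPolynomial (Fin n) K, p.IsHomogeneous (socDeg I) → φ p = 0 → p ∈ I := by
  have hrank : Module.finrank K (gradedPiece I (socDeg I)) = Module.finrank K K := by
    rw [hI.gradedPiece_socDeg, hI.2.2.2, Module.finrank_self]
  set e := LinearEquiv.ofFinrankEq _ _ hrank
  obtain ⟨f, hf⟩ := LinearMap.exists_extend e.toLinearMap
  refine ⟨f ∘ₗ (Ideal.Quotient.mkₐ K I).toLinearMap ∘ₗ homogeneousComponent (socDeg I),
    fun p => ?_, fun p hp => ?_, fun p hp hφp => ?_⟩
  · simp only [LinearMap.comp_apply,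
      homogeneousComponent_eq_self (homogeneousComponent_isHomogeneous (socDeg I) p)]
  · have h : (Ideal.Quotient.mkₐ K I).toLinearMap (homogeneousComponent (socDeg I) p) = 0 :=
      Ideal.Quotient.eq_zero_iff_mem.2 (hI.1 p hp _)
    rw [LinearMap.comp_apply, LinearMap.comp_apply, h, map_zero]
  · have hep : e ⟨_, mk_mem_gradedPiece I hp⟩ = f (Ideal.Quotient.mk I p) :=
      (LinearMap.congr_fun hf _).symm
    rw [LinearMap.comp_apply, LinearMap.comp_apply, homogeneousComponent_eq_self hp] at hφp
    exact Ideal.Quotient.eq_zero_iff_mem.1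
      (congrArg Subtype.val (e.map_eq_zero_iff.1 (hep.trans hφp)))

theorem IsAG.exists_eq_annIdeal (hI : IsAG I) :
    ∃ φ : MvPolynomial (Fin n) K →ₗ[K] K, IsConcentrated φ (socDeg I) ∧ I = annIdeal φ := by
  obtain ⟨φ, hφ, hφI, hIφ⟩ := hI.exists_isConcentrated
  refine ⟨φ, hφ, hI.1.ext hφ.isHomogIdeal_annIdeal fun i p hp => ⟨fun h r => ?_, fun h => ?_⟩⟩
  · exact hφI _ (I.mul_mem_right r h)
  by_contra hpI
  rcases lt_or_ge (socDeg I) i with hi | hi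
  · exact hpI (hI.mem_of_socDeg_lt hi hp)
  · obtain ⟨k, hk⟩ := Nat.exists_eq_add_of_le hi
    obtain ⟨r, hr, hrI⟩ := hI.exists_mul_notMem hk.symm hp hpI
    exact hrI (hIφ _ (hk ▸ hp.mul hr) (h r))

end MacaulayDuality

section HyperplaneSection

variable {I : Ideal (MvPolynomial (Fin n) K)} {ℓ p : MvPolynomial (Fin n) K} {i : ℕ}

theorem IsHomogIdeal.mem_sup_span_singleton_iff (hI : IsHomogIdeal I) (hℓ : ℓ.IsHomogeneous 1)
    (hp : p.IsHomogeneous (i + 1)) :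
    p ∈ I ⊔ Ideal.span {ℓ} ↔
      ∃ q : MvPolynomial (Fin n) K, q.IsHomogeneous i ∧ p - ℓ * q ∈ I := by
  rw [sup_comm, Ideal.mem_span_singleton_sup]
  constructor
  · rintro ⟨q, b, hb, rfl⟩
    refine ⟨homogeneousComponent i q, homogeneousComponent_isHomogeneous i q, ?_⟩
    rw [← homogeneousComponent_add_mul hℓ, add_comm 1 i, ← homogeneousComponent_eq_self hp,
      ← map_sub, mul_comm ℓ q, add_sub_cancel_left]
    exact hI b hb _
  · rintro ⟨q, -, hq⟩
    exact ⟨q, _, hq, by ring⟩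

theorem IsHomogIdeal.hilbFn_succ (hI : IsHomogIdeal I) (hℓ : ℓ.IsHomogeneous 1) (i : ℕ) :
    hilbFn I (i + 1) = hilbFn (I ⊔ Ideal.span {ℓ}) (i + 1) + hilbFn (I.colon {ℓ}) i := by
  set J := I ⊔ Ideal.span {ℓ}
  have hIJ : I ≤ J := le_sup_left
  set f : homogeneousSubmodule (Fin n) K i →ₗ[K] MvPolynomial (Fin n) K ⧸ I :=
    (Ideal.Quotient.mkₐ K I).toLinearMap ∘ₗ LinearMap.mulLeft K ℓ ∘ₗ Submodule.subtype _
  set π := (Ideal.Quotient.factorₐ K hIJ).toLinearMap.domRestrict (gradedPiece I (i + 1))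
  have hrange : LinearMap.range π = gradedPiece J (i + 1) := by
    rw [LinearMap.range_domRestrict, gradedPiece, gradedPiece, ← Submodule.map_comp]
    rfl
  have hker : (LinearMap.ker π).map (gradedPiece I (i + 1)).subtype = LinearMap.range f := by
    ext a
    constructor
    · rintro ⟨⟨_, p, hp, rfl⟩, ha, rfl⟩
      obtain ⟨q, hq, hpq⟩ :=
        (hI.mem_sup_span_singleton_iff hℓ hp).1 (Ideal.Quotient.eq_zero_iff_mem.1 ha)
      exact ⟨⟨q, hq⟩, (Ideal.Quotient.eq.2 hpq).symm⟩
    · rintro ⟨q, rfl⟩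
      refine ⟨⟨_, mk_mem_gradedPiece I (add_comm 1 i ▸ hℓ.mul q.2)⟩, ?_, rfl⟩
      exact Ideal.Quotient.eq_zero_iff_mem.2
        (J.mul_mem_right _ (Ideal.mem_sup_right (Ideal.mem_span_singleton_self ℓ)))
  have hcolon : hilbFn (I.colon {ℓ}) i = Module.finrank K (LinearMap.range f) := by
    refine hilbFn_eq_finrank_range f fun q => ?_
    rw [Submodule.mem_colon_singleton, smul_eq_mul, mul_comm]
    exact Ideal.Quotient.eq_zero_iff_mem
  rw [hcolon, ← hker, Submodule.finrank_map_subtype_eq, hilbFn, hilbFn, ← hrange,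
    LinearMap.finrank_range_add_finrank_ker]

end HyperplaneSection

section Points

variable {n : ℕ} {p : MvPolynomial (Fin (n + 1)) K} {i : ℕ}

theorem aeval_smul_of_isHomogeneous {σ A : Type*} [CommRing A] [Algebra K A]
    {p : MvPolynomial σ K} (hp : p.IsHomogeneous i) (c : A) (x : σ → A) :
    aeval (c • x) p = c ^ i * aeval x p := by
  simp only [aeval_def, eval₂_eq, Finset.mul_sum]
  refine Finset.sum_congr rfl fun d hd => ?_
  have hdeg : ∑ v ∈ d.support, d v = i := by
    simpa [Finsupp.weight_apply, Finsupp.sum] using hp (mem_support_iff.1 hd)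
  simp only [Pi.smul_apply, smul_eq_mul, mul_pow, Finset.prod_mul_distrib,
    Finset.prod_pow_eq_pow_sum, hdeg]
  ring

theorem exists_eval_ne_zero_of_isHomogeneous [Infinite K] (hp : p.IsHomogeneous i) (hp0 : p ≠ 0) :
    ∃ x : Fin (n + 1) → K, x 0 = 1 ∧ eval x p ≠ 0 := by
  obtain ⟨x, hx⟩ : ∃ x, eval x (X 0 * p) ≠ 0 := by
    by_contra! h
    exact mul_ne_zero (X_ne_zero 0) hp0 (MvPolynomial.funext fun x => by rw [h x, map_zero])
  rw [map_mul, eval_X] at hx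
  refine ⟨(x 0)⁻¹ • x, inv_mul_cancel₀ (left_ne_zero_of_mul hx), ?_⟩
  have h : eval ((x 0)⁻¹ • x) p = (x 0)⁻¹ ^ i * eval x p :=
    aeval_smul_of_isHomogeneous hp (x 0)⁻¹ x
  rw [h]
  exact mul_ne_zero (pow_ne_zero _ (inv_ne_zero (left_ne_zero_of_mul hx)))
    (right_ne_zero_of_mul hx)

variable {J : Ideal (MvPolynomial (Fin (n + 1)) K)} {x : Fin (n + 1) → K}

theorem sub_C_eval_mul_X_zero_pow_mem (hJ : ∀ v, X v - C (x v) * X 0 ∈ J)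
    (hp : p.IsHomogeneous i) : p - C (eval x p) * X 0 ^ i ∈ J := by
  set π := Ideal.Quotient.mkₐ K J
  have hX : (fun v => π (X v)) = π (X 0) • (algebraMap K _ ∘ x) := by
    funext v
    exact (Ideal.Quotient.eq.2 (hJ v)).trans (by rw [map_mul, mul_comm]; rfl)
  have hp' : π p = π (C (eval x p) * X 0 ^ i) := calc
    π p = aeval (fun v => π (X v)) p := by rw [← comp_aeval_apply, aeval_X_left_apply]
    _ = π (X 0) ^ i * algebraMap K _ (eval x p) := by
      rw [hX, aeval_smul_of_isHomogeneous hp, aeval_algebraMap_apply]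
      rfl
    _ = π (C (eval x p) * X 0 ^ i) := by
      rw [map_mul, map_pow, mul_comm]
      rfl
  exact Ideal.Quotient.eq.1 hp'

theorem mem_of_eval_ne_zero (hJ : ∀ v, X v - C (x v) * X 0 ∈ J) {f : MvPolynomial (Fin (n + 1)) K}
    {a : ℕ} (hf : f.IsHomogeneous a) (hfJ : f ∈ J) (hfx : eval x f ≠ 0) (hai : a ≤ i)
    (hp : p.IsHomogeneous i) : p ∈ J := by
  have hXa : X 0 ^ a ∈ J := by
    have h : C (eval x f) * X 0 ^ a ∈ J := by
      simpa using J.sub_mem hfJ (sub_C_eval_mul_X_zero_pow_mem hJ hf)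
    exact (Ideal.unit_mul_mem_iff_mem J ((isUnit_iff_ne_zero.2 hfx).map C)).1 h
  have hXi : C (eval x p) * X 0 ^ i ∈ J :=
    J.mul_mem_left _ (J.pow_mem_of_pow_mem hXa hai)
  simpa using J.add_mem (sub_C_eval_mul_X_zero_pow_mem hJ hp) hXi

end Points

section StanleyTheorem

variable {I : Ideal (MvPolynomial (Fin 3) K)} {ℓ f : MvPolynomial (Fin 3) K}

theorem hilbFn_sup_span_singleton_le (hℓ : ℓ.IsHomogeneous 1) (hℓ0 : ℓ ≠ 0) (i : ℕ) :
    hilbFn (I ⊔ Ideal.span {ℓ}) i ≤ i + 1 := by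
  refine (hilbFn_antitone (sup_le_sup_right bot_le _) i).trans ?_
  cases i with
  | zero => exact hilbFn_zero_le_one _
  | succ i =>
    have hbot (k : ℕ) : hilbFn (⊥ : Ideal (MvPolynomial (Fin 3) K)) k =
        Module.finrank K (homogeneousSubmodule (Fin 3) K k) :=
      hilbFn_eq_finrank_homogeneousSubmodule fun p hp _ => hp
    have hcolon : (⊥ : Ideal (MvPolynomial (Fin 3) K)).colon {ℓ} = ⊥ := by
      ext p
      simp [Submodule.mem_colon_singleton, hℓ0]
    have hhom : IsHomogIdeal (⊥ : Ideal (MvPolynomial (Fin 3) K)) := by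
      rintro p rfl k
      rw [map_zero]
      exact zero_mem _
    have h := hhom.hilbFn_succ hℓ i
    rw [hcolon, hbot, hbot, finrank_homogeneousSubmodule_succ] at h
    omega

theorem IsHomogIdeal.exists_hilbFn_succ_le [Infinite K] (hI : IsHomogIdeal I) {a : ℕ}
    (hf : f.IsHomogeneous a) (hf0 : f ≠ 0) (hfI : f ∈ I) :
    ∃ ℓ : MvPolynomial (Fin 3) K, ℓ.IsHomogeneous 1 ∧ ℓ ≠ 0 ∧
      ∀ i, a ≤ i + 1 → hilbFn (I ⊔ Ideal.span {ℓ}) (i + 1) ≤ hilbFn (I ⊔ Ideal.span {ℓ}) i := by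
  obtain ⟨x, hx0, hx⟩ := exists_eval_ne_zero_of_isHomogeneous hf hf0
  set ℓ : Fin 3 → MvPolynomial (Fin 3) K := fun v => X v - C (x v) * X 0
  have hℓ (v : Fin 3) : (ℓ v).IsHomogeneous 1 :=
    (isHomogeneous_X K v).sub (isHomogeneous_C_mul_X (x v) 0)
  refine ⟨ℓ 1, hℓ 1, fun h => ?_, fun i hi => ?_⟩
  · simpa [ℓ] using congrArg (eval (Pi.single 1 1)) h
  set J := I ⊔ Ideal.span {ℓ 1}
  have hJ : IsHomogIdeal J := hI.sup_span_singleton (hℓ 1)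
  have hmem : ∀ v, ℓ v ∈ J ⊔ Ideal.span {ℓ 2} := by
    intro v
    fin_cases v
    · simp [ℓ, hx0]
    · exact Ideal.mem_sup_left (Ideal.mem_sup_right (Ideal.mem_span_singleton_self _))
    · exact Ideal.mem_sup_right (Ideal.mem_span_singleton_self _)
  have hzero : hilbFn (J ⊔ Ideal.span {ℓ 2}) (i + 1) = 0 := hilbFn_eq_zero_iff.2 fun p hp =>
    mem_of_eval_ne_zero hmem hf (Ideal.mem_sup_left (Ideal.mem_sup_left hfI)) hx hi hp
  rw [hJ.hilbFn_succ (hℓ 2), hzero, zero_add]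
  exact hilbFn_antitone Ideal.le_colon i

theorem hilbFn_succ_of_forall_eq_zero {a i : ℕ} (hi : i + 1 < a)
    (ha : ∀ b < a, ∀ p ∈ I, p.IsHomogeneous b → p = 0) :
    hilbFn I (i + 1) = hilbFn I i + (i + 2) := by
  rw [hilbFn_eq_finrank_homogeneousSubmodule (ha _ hi), finrank_homogeneousSubmodule_succ,
    hilbFn_eq_finrank_homogeneousSubmodule (ha i (by omega))]

theorem IsConcentrated.hilbFn_succ_add {φ : MvPolynomial (Fin n) K →ₗ[K] K} {j i k : ℕ}
    {ℓ : MvPolynomial (Fin n) K} (hφ : IsConcentrated φ j)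
    (hℓ : ℓ.IsHomogeneous 1) (hik : i + k + 1 = j) :
    hilbFn (annIdeal φ) (i + 1) + hilbFn (annIdeal φ ⊔ Ideal.span {ℓ}) (k + 1) =
      hilbFn (annIdeal φ) i + hilbFn (annIdeal φ ⊔ Ideal.span {ℓ}) (i + 1) := by
  have hφℓ : IsConcentrated (φ ∘ₗ LinearMap.mulLeft K ℓ) (i + k) :=
    IsConcentrated.comp_mulLeft (by rwa [add_comm 1, hik]) hℓ
  have hcolon : hilbFn ((annIdeal φ).colon {ℓ}) i = hilbFn ((annIdeal φ).colon {ℓ}) k := by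
    rw [annIdeal_colon_singleton]
    exact hφℓ.hilbFn_symm rfl
  have hsymm := hφ.hilbFn_symm (show i + (k + 1) = j from hik)
  have hi := hφ.isHomogIdeal_annIdeal.hilbFn_succ hℓ i
  have hk := hφ.isHomogIdeal_annIdeal.hilbFn_succ hℓ k
  omega

/-- The Hilbert functions of standard graded quotients of `K[x, y]` (Macaulay's condition in two
variables): `g` grows as fast as possible up to the first `i` with `g i ≤ i`, and is nonincreasing
from there on. -/
def IsPlaneOSequence (g : ℕ → ℕ) : Prop :=
  ∀ i, g i ≤ i + 1 ∧ (g i ≤ i → g (i + 1) ≤ g i)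

/-- The first difference of the first half `h 0, …, h ⌊j / 2⌋` of a sequence which is symmetric
about `j / 2`, continued by zero. Stanley's SI-sequences are the symmetric sequences for which
these truncated subtractions are exact and form an O-sequence. -/
def halfDifference (h : ℕ → ℕ) (j : ℕ) : ℕ → ℕ
  | 0 => h 0
  | i + 1 => if 2 * (i + 1) ≤ j then h (i + 1) - h i else 0

theorem sum_halfDifference {h : ℕ → ℕ} {j : ℕ}
    (hmono : ∀ i, 2 * (i + 1) ≤ j → h i ≤ h (i + 1)) {i : ℕ} (hi : 2 * i ≤ j) :
    ∑ k ∈ Finset.range (i + 1), halfDifference h j k = h i := by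
  induction i with
  | zero => simp [halfDifference]
  | succ i ih =>
    rw [Finset.sum_range_succ, ih (by omega), halfDifference, if_pos hi]
    exact Nat.add_sub_of_le (hmono i hi)

/-- The numerical relations between the Hilbert function `h` of a Gorenstein algebra of socle
degree `j` and codimension three, the Hilbert function `c` of its quotient by a linear form, and
the least degree `a` of a relation of the algebra. -/
structure IsSectionHilbFn (h c : ℕ → ℕ) (a j : ℕ) : Prop where
  succ_eq : ∀ i, i + 1 < a → h (i + 1) = h i + (i + 2)
  section_le : ∀ i, c i ≤ i + 1
  section_succ_le : ∀ i, a ≤ i + 1 → c (i + 1) ≤ c i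
  succ_add : ∀ i k, i + k + 1 = j → h (i + 1) + c (k + 1) = h i + c (i + 1)

variable {h c : ℕ → ℕ} {a j : ℕ}

theorem IsSectionHilbFn.section_anti (H : IsSectionHilbFn h c a j) {i k : ℕ} (hi : a ≤ i + 1)
    (hik : i ≤ k) : c k ≤ c i := by
  induction k, hik using Nat.le_induction with
  | base => exact le_rfl
  | succ k hk ih => exact (H.section_succ_le k (by omega)).trans ih

theorem IsSectionHilbFn.le_succ (H : IsSectionHilbFn h c a j) {i : ℕ} (hi : 2 * (i + 1) ≤ j) :
    h i ≤ h (i + 1) := by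
  rcases lt_or_ge (i + 1) a with hia | hia
  · exact (H.succ_eq i hia).ge.trans' (Nat.le_add_right _ _)
  · have hadd := H.succ_add i (j - i - 1) (by omega)
    have hanti := H.section_anti (i := i + 1) (k := j - i - 1 + 1) (by omega) (by omega)
    omega

theorem IsSectionHilbFn.isPlaneOSequence_halfDifference (H : IsSectionHilbFn h c a j)
    (h0 : h 0 = 1) : IsPlaneOSequence (halfDifference h j) := by
  rintro (- | s)
  · simp [halfDifference, h0]
  rcases lt_or_ge j (2 * (s + 1)) with hj | hj
  · simp [halfDifference, hj.not_ge, show ¬2 * (s + 1 + 1) ≤ j by omega]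
  obtain ⟨k, rfl⟩ := Nat.exists_eq_add_of_le (show s + 2 ≤ j by omega)
  have hlow := H.succ_eq s
  have hle := H.section_le (s + 1)
  have hadd := H.succ_add s (k + 1) (by omega)
  have hadd' := H.succ_add (s + 1) k (by omega)
  have hanti := H.section_succ_le (s + 1)
  have hanti' := H.section_succ_le (k + 1)
  simp only [halfDifference, if_pos hj]
  split_ifs <;> omega

theorem IsAG.exists_isSectionHilbFn [Infinite K] (hI : IsAG I) :
    ∃ c a, IsSectionHilbFn (hilbFn I) c a (socDeg I) := by
  have hex : ∃ a, ∃ f ∈ I, f.IsHomogeneous a ∧ f ≠ 0 :=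
    ⟨socDeg I + 1, X 0 ^ (socDeg I + 1), hI.mem_of_socDeg_lt (Nat.lt_succ_self _)
      (isHomogeneous_X_pow 0 _), isHomogeneous_X_pow 0 _, pow_ne_zero _ (X_ne_zero 0)⟩
  obtain ⟨f, hfI, hf, hf0⟩ := Nat.find_spec hex
  have hmin (b : ℕ) (hb : b < Nat.find hex) (p) (hpI : p ∈ I) (hp : p.IsHomogeneous b) : p = 0 :=
    not_not.1 fun hp0 => Nat.find_min hex hb ⟨p, hpI, hp, hp0⟩
  obtain ⟨ℓ, hℓ, hℓ0, hanti⟩ := hI.1.exists_hilbFn_succ_le hf hf0 hfI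
  obtain ⟨φ, hφ, hIφ⟩ := hI.exists_eq_annIdeal
  refine ⟨hilbFn (I ⊔ Ideal.span {ℓ}), Nat.find hex,
    fun i hi => hilbFn_succ_of_forall_eq_zero hi hmin, hilbFn_sup_span_singleton_le hℓ hℓ0,
    hanti, fun i k hik => ?_⟩
  rw [hIφ] at hik ⊢
  exact hφ.hilbFn_succ_add hℓ (hIφ ▸ hik)

theorem IsAG.exists_isPlaneOSequence [Infinite K] (hI : IsAG I) :
    ∃ g, IsPlaneOSequence g ∧
      ∀ i, 2 * i ≤ socDeg I → ∑ k ∈ Finset.range (i + 1), g k = hilbFn I i := by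
  obtain ⟨c, a, H⟩ := hI.exists_isSectionHilbFn
  exact ⟨halfDifference (hilbFn I) (socDeg I), H.isPlaneOSequence_halfDifference hI.hilbFn_zero,
    fun i hi => sum_halfDifference (fun _ => H.le_succ) hi⟩

end StanleyTheorem

section Staircases

/-- The monomials of degree less than `N` outside the initial lex ideal of `K[x, y]` with Hilbert
function `g`; the pair `m` encodes the monomial `x ^ m.1 * y ^ m.2`. -/
def staircase (g : ℕ → ℕ) (N : ℕ) : Finset (ℕ × ℕ) :=
  (Finset.range N).biUnion fun k => {m ∈ Finset.HasAntidiagonal.antidiagonal k | m.1 < g k}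

/-- The monomials in `M` of degree at most `i`. -/
def truncation (M : Finset (ℕ × ℕ)) (i : ℕ) : Finset (ℕ × ℕ) := {m ∈ M | m.1 + m.2 ≤ i}

variable {g : ℕ → ℕ} {N i : ℕ} {m : ℕ × ℕ}

theorem mem_staircase : m ∈ staircase g N ↔ m.1 + m.2 < N ∧ m.1 < g (m.1 + m.2) := by
  simp only [staircase, Finset.mem_biUnion, Finset.mem_range, Finset.mem_filter,
    Finset.HasAntidiagonal.mem_antidiagonal]
  exact ⟨fun ⟨_, hk, rfl, hm⟩ => ⟨hk, hm⟩, fun ⟨hk, hm⟩ => ⟨_, hk, rfl, hm⟩⟩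

theorem mem_truncation {M : Finset (ℕ × ℕ)} :
    m ∈ truncation M i ↔ m ∈ M ∧ m.1 + m.2 ≤ i := Finset.mem_filter

theorem card_staircase (hg : ∀ k, g k ≤ k + 1) :
    (staircase g N).card = ∑ k ∈ Finset.range N, g k := by
  rw [staircase, Finset.card_biUnion]
  · refine Finset.sum_congr rfl fun k _ => ?_
    rw [Finset.Nat.antidiagonal_eq_map, Finset.filter_map, Finset.card_map]
    refine (congrArg Finset.card (Finset.ext fun x => ?_)).trans (Finset.card_range (g k))
    rw [Finset.mem_filter, Finset.mem_range, Finset.mem_range]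
    exact ⟨And.right, fun hx => ⟨hx.trans_le (hg k), hx⟩⟩
  · intro k _ k' _ hkk'
    simp only [Function.onFun, Finset.disjoint_left, Finset.mem_filter,
      Finset.HasAntidiagonal.mem_antidiagonal]
    rintro m ⟨hk, -⟩ ⟨hk', -⟩
    exact hkk' (hk.symm.trans hk')

theorem truncation_staircase (h : i < N) :
    truncation (staircase g N) i = staircase g (i + 1) := by
  ext m
  rw [mem_truncation, mem_staircase, mem_staircase]
  omega

theorem IsPlaneOSequence.lt_of_le (hg : IsPlaneOSequence g) {a k l : ℕ} (hkl : k ≤ l)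
    (hak : a ≤ k) (hal : a < g l) : a < g k := by
  induction l, hkl using Nat.le_induction with
  | base => exact hal
  | succ l hkl ih =>
    refine ih (lt_of_not_ge fun hla => ?_)
    exact hal.not_ge (((hg l).2 (hla.trans (hak.trans hkl))).trans hla)

theorem IsPlaneOSequence.isLowerSet_staircase (hg : IsPlaneOSequence g) (N : ℕ) :
    IsLowerSet (staircase g N : Set (ℕ × ℕ)) := by
  intro m p hpm hm
  have hdeg : p.1 + p.2 ≤ m.1 + m.2 := add_le_add hpm.1 hpm.2
  rw [Finset.mem_coe, mem_staircase] at hm ⊢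
  exact ⟨hdeg.trans_lt hm.1,
    hg.lt_of_le hdeg (Nat.le_add_right _ _) (hpm.1.trans_lt hm.2)⟩

end Staircases

section GramMatrices

variable {ι : Type*} {φ : MvPolynomial (Fin n) K →ₗ[K] K}
  {q ℓ : MvPolynomial (Fin n) K} {b : ι → MvPolynomial (Fin n) K} {i j k : ℕ}

theorem span_range_mk_le_gradedPiece {I : Ideal (MvPolynomial (Fin n) K)}
    (hb : ∀ s, (b s).IsHomogeneous i) :
    Submodule.span K (Set.range fun s => Ideal.Quotient.mk I (b s)) ≤ gradedPiece I i :=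
  Submodule.span_le.2 (Set.range_subset_iff.2 fun s => mk_mem_gradedPiece I (hb s))

/-- The Gram matrix of the family `b` for the bilinear form `(x, y) ↦ φ (q * x * y)`. For `q` a
power of a linear form and `b` a basis of a graded piece of `R ⧸ annIdeal φ` this is a higher
Hessian of the dual generator. -/
def gramMatrix (φ : MvPolynomial (Fin n) K →ₗ[K] K) (q : MvPolynomial (Fin n) K)
    (b : ι → MvPolynomial (Fin n) K) : Matrix ι ι K :=
  Matrix.of fun s t => φ (q * b s * b t)

variable [Fintype ι]

theorem span_range_mk_eq_gradedPiece {I : Ideal (MvPolynomial (Fin n) K)}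
    (hb : ∀ s, (b s).IsHomogeneous i)
    (h : LinearIndependent K fun s => Ideal.Quotient.mk I (b s))
    (hcard : Fintype.card ι = hilbFn I i) :
    Submodule.span K (Set.range fun s => Ideal.Quotient.mk I (b s)) = gradedPiece I i :=
  Submodule.eq_of_le_of_finrank_eq (span_range_mk_le_gradedPiece hb)
    ((finrank_span_eq_card h).trans hcard)

variable [DecidableEq ι]

theorem linearIndependent_mk_mul_of_det_gramMatrix_ne_zero (h : (gramMatrix φ q b).det ≠ 0) :
    LinearIndependent K fun s => Ideal.Quotient.mk (annIdeal φ) (q * b s) := by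
  rw [Fintype.linearIndependent_iff]
  intro c hc
  have hmem : ∑ s, c s • (q * b s) ∈ annIdeal φ := by
    rw [← Ideal.Quotient.eq_zero_iff_mem, ← hc]
    simp only [← Ideal.Quotient.mkₐ_eq_mk K, map_sum, map_smul]
  refine congrFun (Matrix.eq_zero_of_vecMul_eq_zero h (funext fun t => ?_))
  simpa [Matrix.vecMul, dotProduct, gramMatrix, Finset.sum_mul] using hmem (b t)

theorem linearIndependent_mk_of_det_gramMatrix_ne_zero (h : (gramMatrix φ q b).det ≠ 0) :
    LinearIndependent K fun s => Ideal.Quotient.mk (annIdeal φ) (b s) := by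
  have h' := linearIndependent_mk_mul_of_det_gramMatrix_ne_zero h
  simp only [map_mul] at h'
  exact h'.of_comp (LinearMap.mulLeft K (Ideal.Quotient.mk (annIdeal φ) q))

theorem card_le_hilbFn_of_det_gramMatrix_ne_zero (hb : ∀ s, (b s).IsHomogeneous i)
    (h : (gramMatrix φ q b).det ≠ 0) : Fintype.card ι ≤ hilbFn (annIdeal φ) i := by
  rw [← finrank_span_eq_card (linearIndependent_mk_of_det_gramMatrix_ne_zero h)]
  exact Submodule.finrank_mono (span_range_mk_le_gradedPiece hb)

theorem IsConcentrated.powMulBij (hφ : IsConcentrated φ j) (hik : i + (i + k) = j)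
    (hℓ : ℓ.IsHomogeneous 1) (hb : ∀ s, (b s).IsHomogeneous i)
    (hcard : Fintype.card ι = hilbFn (annIdeal φ) i) (h : (gramMatrix φ (ℓ ^ k) b).det ≠ 0) :
    PowMulBij (annIdeal φ) (Ideal.Quotient.mk (annIdeal φ) ℓ) k i (i + k) := by
  have hind := linearIndependent_mk_mul_of_det_gramMatrix_ne_zero h
  have hspan := span_range_mk_eq_gradedPiece hb
    (linearIndependent_mk_of_det_gramMatrix_ne_zero h) hcard
  have hspan' := span_range_mk_eq_gradedPiece (b := fun s => ℓ ^ k * b s) (i := i + k)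
    (fun s => by simpa only [one_mul, add_comm i k] using (hℓ.pow k).mul (hb s)) hind
    (hcard.trans (hφ.hilbFn_symm hik))
  have hmul (c : ι → K) :
      Ideal.Quotient.mk (annIdeal φ) ℓ ^ k * ∑ s, c s • Ideal.Quotient.mk (annIdeal φ) (b s) =
        ∑ s, c s • Ideal.Quotient.mk (annIdeal φ) (ℓ ^ k * b s) := by
    simp only [Finset.mul_sum, mul_smul_comm, map_mul, map_pow]
  constructor
  · intro a ha h0
    rw [← hspan, Submodule.mem_span_range_iff_exists_fun] at ha
    obtain ⟨c, rfl⟩ := ha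
    have hc := Fintype.linearIndependent_iff.1 hind c ((hmul c).symm.trans h0)
    simp only [hc, zero_smul, Finset.sum_const_zero]
  · intro a ha
    rw [← hspan', Submodule.mem_span_range_iff_exists_fun] at ha
    obtain ⟨c, rfl⟩ := ha
    refine ⟨_, ?_, hmul c⟩
    rw [← hspan, Submodule.mem_span_range_iff_exists_fun]
    exact ⟨c, rfl⟩

end GramMatrices

section DualGenerators

/-- The functional dual to `F`: it sends each monomial to its coefficient in `F`. -/
def coeffPairing (F : MvPolynomial (Fin n) K) : MvPolynomial (Fin n) K →ₗ[K] K :=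
  (basisMonomials (Fin n) K).constr K fun d => coeff d F

variable {F p : MvPolynomial (Fin n) K} {j : ℕ}

theorem coeffPairing_monomial (F : MvPolynomial (Fin n) K) (d : Fin n →₀ ℕ) (c : K) :
    coeffPairing F (monomial d c) = c * coeff d F := by
  have h : monomial d c = c • basisMonomials (Fin n) K d := by
    rw [coe_basisMonomials, smul_monomial, smul_eq_mul, mul_one]
  rw [h, map_smul, coeffPairing, Module.Basis.constr_basis, smul_eq_mul]

theorem coeffPairing_apply (F p : MvPolynomial (Fin n) K) :
    coeffPairing F p = ∑ d ∈ p.support, coeff d p * coeff d F := by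
  conv_lhs => rw [p.as_sum, map_sum]
  simp only [coeffPairing_monomial]

theorem coeffPairing_sum_smul {ι : Type*} (s : Finset ι) (w : ι → K)
    (F : ι → MvPolynomial (Fin n) K) (p : MvPolynomial (Fin n) K) :
    coeffPairing (∑ m ∈ s, w m • F m) p = ∑ m ∈ s, w m * coeffPairing (F m) p := by
  simp only [coeffPairing_apply, coeff_sum, coeff_smul, smul_eq_mul, Finset.mul_sum]
  rw [Finset.sum_comm]
  exact Finset.sum_congr rfl fun m _ => Finset.sum_congr rfl fun d _ => mul_left_comm _ _ _

theorem isConcentrated_coeffPairing (hF : F.IsHomogeneous j) :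
    IsConcentrated (coeffPairing F) j := by
  have h : coeffPairing F ∘ₗ homogeneousComponent j = coeffPairing F := by
    refine (basisMonomials (Fin n) K).ext fun d => ?_
    rw [LinearMap.comp_apply, coe_basisMonomials,
      homogeneousComponent_of_mem (isHomogeneous_monomial (1 : K) rfl)]
    split_ifs with hd
    · rfl
    · rw [map_zero, coeffPairing_monomial, hF.coeff_eq_zero (Ne.symm hd), mul_zero]
  exact LinearMap.congr_fun h

theorem coeff_contractMon (d e : Fin n →₀ ℕ) (F : MvPolynomial (Fin n) K) :
    coeff e (contractMon d F) = coeff (d + e) F := by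
  rw [contractMon, coeff_sum, Finset.sum_eq_single (d + e)]
  · rw [if_pos le_self_add, add_tsub_cancel_left, coeff_monomial, if_pos rfl]
  · intro b _ hb
    split_ifs with h
    · rw [coeff_monomial, if_neg]
      rintro rfl
      exact hb (add_tsub_cancel_of_le h).symm
    · exact coeff_zero e
  · intro h
    rw [notMem_support_iff.1 h, if_pos le_self_add, map_zero, coeff_zero]

theorem coeff_contract (p F : MvPolynomial (Fin n) K) (e : Fin n →₀ ℕ) :
    coeff e (contract p F) = coeffPairing F (p * monomial e 1) := by
  conv_rhs => rw [p.as_sum, Finset.sum_mul, map_sum]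
  simp only [contract, coeff_sum, coeff_smul, coeff_contractMon, monomial_mul, mul_one,
    coeffPairing_monomial, smul_eq_mul]

theorem contract_eq_zero_iff_mem_annIdeal : contract p F = 0 ↔ p ∈ annIdeal (coeffPairing F) := by
  rw [mem_annIdeal]
  refine ⟨fun h => ?_, fun h => ?_⟩
  · have hbasis : coeffPairing F ∘ₗ LinearMap.mulLeft K p = 0 :=
      (basisMonomials (Fin n) K).ext fun e => by
        simpa [h] using (coeff_contract p F e).symm
    exact fun r => LinearMap.congr_fun hbasis r
  · ext e
    rw [coeff_contract, h, coeff_zero]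

end DualGenerators

section GramDeterminants

/-- The value at `p` of the functional dual to a polynomial with indeterminate coefficients: the
variable indexed by `d` stands for the coefficient of the monomial `d`. -/
def genericPairing (p : MvPolynomial (Fin n) K) : MvPolynomial (Fin n →₀ ℕ) K :=
  ∑ d ∈ p.support, C (coeff d p) * X d

theorem eval_genericPairing (F p : MvPolynomial (Fin n) K) :
    eval (fun d => coeff d F) (genericPairing p) = coeffPairing F p := by
  simp only [genericPairing, coeffPairing_apply, map_sum, map_mul, eval_C, eval_X]

variable {ι : Type*} [Fintype ι] [DecidableEq ι]

/-- The determinant of the Gram matrix of the family `b`, as a polynomial in the coefficients of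
the dual generator. -/
def gramDet (q : MvPolynomial (Fin n) K) (b : ι → MvPolynomial (Fin n) K) :
    MvPolynomial (Fin n →₀ ℕ) K :=
  (Matrix.of fun s t => genericPairing (q * b s * b t)).det

theorem eval_gramDet (F q : MvPolynomial (Fin n) K) (b : ι → MvPolynomial (Fin n) K) :
    eval (fun d => coeff d F) (gramDet q b) = (gramMatrix (coeffPairing F) q b).det := by
  rw [gramDet, RingHom.map_det]
  congr 1
  ext s t
  exact eval_genericPairing F _

end GramDeterminants

section GenericCoefficients

theorem exists_forall_eval_ne_zero [Infinite K] {σ ι : Type*} {s : Finset ι}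
    {P : ι → MvPolynomial σ K} (h : ∀ i ∈ s, P i ≠ 0) : ∃ w, ∀ i ∈ s, eval w (P i) ≠ 0 := by
  by_contra! hw
  refine Finset.prod_ne_zero_iff.2 h (MvPolynomial.funext fun w => ?_)
  obtain ⟨i, hi, h0⟩ := hw w
  rw [map_prod, map_zero, Finset.prod_eq_zero hi h0]

theorem exists_forall_eval_coeff_ne_zero [Infinite K] {ι κ : Type*} {s : Finset ι} (M : Finset κ)
    (F : κ → MvPolynomial (Fin n) K) {P : ι → MvPolynomial (Fin n →₀ ℕ) K}
    (h : ∀ i ∈ s, ∃ w : κ → K, eval (fun d => coeff d (∑ m ∈ M, w m • F m)) (P i) ≠ 0) :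
    ∃ w : κ → K, ∀ i ∈ s, eval (fun d => coeff d (∑ m ∈ M, w m • F m)) (P i) ≠ 0 := by
  set Q : (Fin n →₀ ℕ) → MvPolynomial κ K := fun d => ∑ m ∈ M, C (coeff d (F m)) * X m
  have hQ (w : κ → K) (i : ι) : eval w (bind₁ Q (P i)) =
      eval (fun d => coeff d (∑ m ∈ M, w m • F m)) (P i) := by
    have hd (d : Fin n →₀ ℕ) : eval w (Q d) = coeff d (∑ m ∈ M, w m • F m) := by
      simp [Q, coeff_sum, mul_comm]
    simp only [← hd]
    exact aeval_bind₁ w Q (P i)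
  simp only [← hQ] at h ⊢
  refine exists_forall_eval_ne_zero fun i hi h0 => ?_
  obtain ⟨w, hw⟩ := h i hi
  rw [h0, map_zero] at hw
  exact hw rfl

end GenericCoefficients

section EvaluationForms

/-- The form of degree `j` dual to the evaluation of forms of degree `j` at the point `x`, that is,
the divided power of degree `j` of the linear form with coefficients `x`. -/
def evalForm (x : Fin n → K) (j : ℕ) : MvPolynomial (Fin n) K :=
  ∑ e ∈ Finset.univ.finsuppAntidiag j, monomial e (∏ v, x v ^ e v)

variable {j : ℕ} {p : MvPolynomial (Fin n) K}

theorem mem_finsuppAntidiag_univ_iff {e : Fin n →₀ ℕ} :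
    e ∈ Finset.univ.finsuppAntidiag j ↔ e.degree = j := by
  simp [Finset.mem_finsuppAntidiag, Finsupp.degree_eq_sum]

theorem isHomogeneous_evalForm (x : Fin n → K) (j : ℕ) : (evalForm x j).IsHomogeneous j :=
  IsHomogeneous.sum _ _ _ fun _ he =>
    isHomogeneous_monomial _ (mem_finsuppAntidiag_univ_iff.1 he)

theorem coeffPairing_evalForm (x : Fin n → K) (hp : p.IsHomogeneous j) :
    coeffPairing (evalForm x j) p = eval x p := by
  rw [coeffPairing_apply, eval_eq']
  refine Finset.sum_congr rfl fun d hd => ?_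
  have hdeg : d.degree = j := by
    rw [Finsupp.degree_eq_weight_one]
    exact hp (mem_support_iff.1 hd)
  rw [evalForm, coeff_sum, Finset.sum_eq_single_of_mem d (mem_finsuppAntidiag_univ_iff.2 hdeg)
    fun e _ hed => by rw [coeff_monomial, if_neg hed], coeff_monomial, if_pos rfl]

end EvaluationForms

section NewtonForms

/-- The point `(a p.1 : a p.2 : 1)` of the projective plane. -/
def node (a : ℕ → K) (p : ℕ × ℕ) : Fin 3 → K := ![a p.1, a p.2, 1]

/-- The homogenization to degree `i` of the bivariate Newton polynomial
`∏_{k < m.1} (x - a k) * ∏_{k < m.2} (y - a k)`. It has degree `i` only if `m.1 + m.2 ≤ i`. -/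
def newtonForm (a : ℕ → K) (i : ℕ) (m : ℕ × ℕ) : MvPolynomial (Fin 3) K :=
  (∏ k ∈ Finset.range m.1, (X 0 - C (a k) * X 2)) *
    (∏ k ∈ Finset.range m.2, (X 1 - C (a k) * X 2)) * X 2 ^ (i - (m.1 + m.2))

variable {a : ℕ → K} {i j k : ℕ} {m p : ℕ × ℕ}

theorem isHomogeneous_newtonForm (a : ℕ → K) (hm : m.1 + m.2 ≤ i) :
    (newtonForm a i m).IsHomogeneous i := by
  have hprod (v : Fin 3) (b : ℕ) :
      (∏ k ∈ Finset.range b, (X v - C (a k) * X 2 : MvPolynomial (Fin 3) K)).IsHomogeneous b := by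
    simpa using IsHomogeneous.prod (Finset.range b) _ (fun _ => 1) fun k _ =>
      (isHomogeneous_X K v).sub (isHomogeneous_C_mul_X (a k) 2)
  have h := ((hprod 0 m.1).mul (hprod 1 m.2)).mul (isHomogeneous_X_pow (R := K) 2 (i - (m.1 + m.2)))
  rwa [Nat.add_sub_of_le hm] at h

theorem eval_newtonForm_ne_zero_iff (ha : Function.Injective a) :
    eval (node a p) (newtonForm a i m) ≠ 0 ↔ m ≤ p := by
  simp [newtonForm, node, Finset.prod_eq_zero_iff, sub_eq_zero, ha.eq_iff, Prod.le_def]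

theorem det_ne_zero_of_forall_ne_zero_imp_le {ι : Type*} [Fintype ι] [DecidableEq ι]
    [PartialOrder ι] {A : Matrix ι ι K} (hdiag : ∀ s, A s s ≠ 0)
    (hle : ∀ s t, A s t ≠ 0 → s ≤ t) : A.det ≠ 0 := by
  intro hdet
  obtain ⟨c, hc0, hc⟩ := Matrix.exists_vecMul_eq_zero_iff.2 hdet
  obtain ⟨m, hm, hmin⟩ := (Set.toFinite {s | c s ≠ 0}).exists_minimal (Function.ne_iff.1 hc0)
  have hcm : ∑ s, c s * A s m = c m * A m m := by
    refine Finset.sum_eq_single m (fun s _ hsm => ?_) (by simp)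
    by_contra h
    have hsm' := hle s m (right_ne_zero_of_mul h)
    exact hsm (hsm'.antisymm (hmin (left_ne_zero_of_mul h) hsm'))
  exact mul_ne_zero hm (hdiag m) (hcm.symm.trans (congrFun hc m))

/-- The values of the Newton forms of degree `i` with exponents in `S` at the nodes in `S`. -/
def newtonMatrix (a : ℕ → K) (i : ℕ) (S : Finset (ℕ × ℕ)) : Matrix S S K :=
  Matrix.of fun m p => eval (node a p) (newtonForm a i m)

theorem det_newtonMatrix_ne_zero (ha : Function.Injective a) (i : ℕ) (S : Finset (ℕ × ℕ)) :
    (newtonMatrix a i S).det ≠ 0 :=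
  det_ne_zero_of_forall_ne_zero_imp_le (fun _ => (eval_newtonForm_ne_zero_iff ha).2 le_rfl)
    fun _ _ => (eval_newtonForm_ne_zero_iff ha).1

theorem span_newtonForm (ha : Function.Injective a) (i : ℕ) :
    Submodule.span K (Set.range fun m : staircase (· + 1) (i + 1) => newtonForm a i m) =
      homogeneousSubmodule (Fin 3) K i := by
  have hind : LinearIndependent K fun m : staircase (· + 1) (i + 1) => newtonForm a i m := by
    rw [Fintype.linearIndependent_iff]
    intro c hc
    refine congrFun (Matrix.eq_zero_of_vecMul_eq_zero (det_newtonMatrix_ne_zero ha i _)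
      (funext fun p => ?_))
    simpa [Matrix.vecMul, dotProduct, newtonMatrix, smul_eval] using
      congrArg (eval (node a p)) hc
  refine Submodule.eq_of_le_of_finrank_eq (Submodule.span_le.2 ?_) ?_
  · rintro _ ⟨m, rfl⟩
    exact isHomogeneous_newtonForm a (Nat.lt_succ_iff.1 (mem_staircase.1 m.2).1)
  · rw [finrank_span_eq_card hind, Fintype.card_coe, card_staircase fun _ => le_rfl,
      finrank_homogeneousSubmodule_eq_sum]

end NewtonForms

section NodeForms

/-- The dual generator of degree `j` whose functional is the sum of the evaluations at the nodes
in `M`, weighted by `w`. -/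
def nodeForm (a : ℕ → K) (M : Finset (ℕ × ℕ)) (w : ℕ × ℕ → K) (j : ℕ) : MvPolynomial (Fin 3) K :=
  ∑ p ∈ M, w p • evalForm (node a p) j

variable {a : ℕ → K} {M : Finset (ℕ × ℕ)} {w : ℕ × ℕ → K} {i j k : ℕ} {m : ℕ × ℕ}

theorem isHomogeneous_nodeForm (a : ℕ → K) (M : Finset (ℕ × ℕ)) (w : ℕ × ℕ → K) (j : ℕ) :
    (nodeForm a M w j).IsHomogeneous j :=
  (homogeneousSubmodule (Fin 3) K j).sum_smul_mem w fun p _ => isHomogeneous_evalForm (node a p) j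

theorem coeffPairing_nodeForm {r : MvPolynomial (Fin 3) K} (hr : r.IsHomogeneous j) :
    coeffPairing (nodeForm a M w j) r = ∑ p ∈ M, w p * eval (node a p) r := by
  simp only [nodeForm, coeffPairing_sum_smul, coeffPairing_evalForm _ hr]

theorem newtonForm_mem_annIdeal_nodeForm (ha : Function.Injective a)
    (hM : IsLowerSet (M : Set (ℕ × ℕ))) (hik : i + k = j) (hm : m.1 + m.2 ≤ i) (hmM : m ∉ M) :
    newtonForm a i m ∈ annIdeal (coeffPairing (nodeForm a M w j)) := by
  have hmi := isHomogeneous_newtonForm a hm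
  refine ((isConcentrated_coeffPairing (isHomogeneous_nodeForm a M w j)).mem_annIdeal_iff hik
    hmi).2 fun r hr => ?_
  rw [coeffPairing_nodeForm (hik ▸ hmi.mul hr)]
  refine Finset.sum_eq_zero fun p hp => ?_
  have h0 : eval (node a p) (newtonForm a i m) = 0 :=
    not_not.1 fun h => hmM (hM ((eval_newtonForm_ne_zero_iff ha).1 h) hp)
  rw [map_mul, h0, zero_mul, mul_zero]

theorem hilbFn_annIdeal_nodeForm_le (ha : Function.Injective a)
    (hM : IsLowerSet (M : Set (ℕ × ℕ))) (hik : i + k = j) :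
    hilbFn (annIdeal (coeffPairing (nodeForm a M w j))) i ≤ (truncation M i).card := by
  set I := annIdeal (coeffPairing (nodeForm a M w j))
  set v : truncation M i → MvPolynomial (Fin 3) K ⧸ I :=
    fun m => Ideal.Quotient.mk I (newtonForm a i m)
  have hle : gradedPiece I i ≤ Submodule.span K (Set.range v) := by
    rw [gradedPiece, ← span_newtonForm ha, Submodule.map_span, Submodule.span_le]
    rintro _ ⟨_, ⟨m, rfl⟩, rfl⟩
    have hmi : m.1.1 + m.1.2 ≤ i := Nat.lt_succ_iff.1 (mem_staircase.1 m.2).1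
    by_cases hmM : m.1 ∈ M
    · exact Submodule.subset_span ⟨⟨m, mem_truncation.2 ⟨hmM, hmi⟩⟩, rfl⟩
    · have h0 : Ideal.Quotient.mk I (newtonForm a i m) = 0 :=
        Ideal.Quotient.eq_zero_iff_mem.2 (newtonForm_mem_annIdeal_nodeForm ha hM hik hmi hmM)
      exact h0 ▸ zero_mem (Submodule.span K (Set.range v))
  have := Module.Finite.span_of_finite K (Set.finite_range v)
  calc hilbFn I i ≤ (Set.range v).finrank K := Submodule.finrank_mono hle
    _ ≤ (truncation M i).card := (finrank_range_le_card v).trans_eq (Fintype.card_coe _)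

theorem exists_det_gramMatrix_nodeForm_ne_zero (ha : Function.Injective a) (M : Finset (ℕ × ℕ))
    (hij : 2 * i ≤ j) :
    ∃ w, (gramMatrix (coeffPairing (nodeForm a M w j)) (X 2 ^ (j - 2 * i))
      fun m : truncation M i => newtonForm a i m).det ≠ 0 := by
  refine ⟨fun p => if p.1 + p.2 ≤ i then 1 else 0, ?_⟩
  have hV := det_newtonMatrix_ne_zero ha i (truncation M i)
  set V := newtonMatrix a i (truncation M i)
  suffices h : gramMatrix _ _ _ = V * V.transpose by
    rw [h, Matrix.det_mul, Matrix.det_transpose]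
    exact mul_ne_zero hV hV
  ext s t
  have hhom : (X 2 ^ (j - 2 * i) * newtonForm a i s * newtonForm a i t).IsHomogeneous j := by
    convert ((isHomogeneous_X_pow (R := K) (2 : Fin 3) (j - 2 * i)).mul
      (isHomogeneous_newtonForm a (mem_truncation.1 s.2).2)).mul
      (isHomogeneous_newtonForm a (mem_truncation.1 t.2).2) using 1
    omega
  calc gramMatrix _ _ _ s t
      = ∑ p ∈ truncation M i, eval (node a p) (newtonForm a i s) *
          eval (node a p) (newtonForm a i t) := by
        refine (coeffPairing_nodeForm hhom).trans
          ((Finset.sum_congr rfl fun p _ => ?_).trans (Finset.sum_filter _ _).symm)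
        simp [node]
    _ = (V * V.transpose) s t := (Finset.sum_coe_sort _ _).symm

end NodeForms

section LefschetzDiscriminant

/-- The product over `i ≤ j / 2` of the determinants, in terms of the coefficients of a dual
generator of degree `j`, of multiplication by `X 2 ^ (j - 2 * i)` from degree `i` to degree `j - i`
with respect to the Newton forms with exponents in `M`. -/
def lefschetzDiscriminant (a : ℕ → K) (M : Finset (ℕ × ℕ)) (j : ℕ) :
    MvPolynomial (Fin 3 →₀ ℕ) K :=
  ∏ i ∈ Finset.range (j / 2 + 1),
    gramDet (X 2 ^ (j - 2 * i)) fun m : truncation M i => newtonForm a i m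

variable {a : ℕ → K} {M : Finset (ℕ × ℕ)} {F : MvPolynomial (Fin 3) K} {j : ℕ}

theorem eval_lefschetzDiscriminant_ne_zero_iff :
    eval (fun d => coeff d F) (lefschetzDiscriminant a M j) ≠ 0 ↔
      ∀ i, 2 * i ≤ j → (gramMatrix (coeffPairing F) (X 2 ^ (j - 2 * i))
        fun m : truncation M i => newtonForm a i m).det ≠ 0 := by
  simp only [lefschetzDiscriminant, map_prod, Finset.prod_ne_zero_iff, eval_gramDet,
    Finset.mem_range, Nat.lt_succ_iff, Nat.le_div_iff_mul_le two_pos, mul_comm _ 2]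

theorem card_truncation_le_hilbFn
    (hF : eval (fun d => coeff d F) (lefschetzDiscriminant a M j) ≠ 0) {i : ℕ} (hi : 2 * i ≤ j) :
    (truncation M i).card ≤ hilbFn (annIdeal (coeffPairing F)) i := by
  rw [← Fintype.card_coe]
  exact card_le_hilbFn_of_det_gramMatrix_ne_zero
    (fun m => isHomogeneous_newtonForm a (mem_truncation.1 m.2).2)
    (eval_lefschetzDiscriminant_ne_zero_iff.1 hF i hi)

theorem strongLefschetz_of_eval_lefschetzDiscriminant_ne_zero (hF : F.IsHomogeneous j)
    (hj : socDeg (annIdeal (coeffPairing F)) = j)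
    (hcard : ∀ i, 2 * i ≤ j → (truncation M i).card = hilbFn (annIdeal (coeffPairing F)) i)
    (hne : eval (fun d => coeff d F) (lefschetzDiscriminant a M j) ≠ 0) :
    StrongLefschetz (annIdeal (coeffPairing F)) := by
  refine ⟨_, mk_mem_gradedPiece _ (isHomogeneous_X K 2), fun i hi => ?_⟩
  rw [hj] at hi ⊢
  rw [show j - i = i + (j - 2 * i) by omega]
  exact (isConcentrated_coeffPairing hF).powMulBij (by omega) (isHomogeneous_X K 2)
    (fun m => isHomogeneous_newtonForm a (mem_truncation.1 m.2).2)
    ((Fintype.card_coe _).trans (hcard i hi))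
    (eval_lefschetzDiscriminant_ne_zero_iff.1 hne i hi)

theorem exists_eval_lefschetzDiscriminant_nodeForm_ne_zero [Infinite K] (ha : Function.Injective a)
    (M : Finset (ℕ × ℕ)) (j : ℕ) :
    ∃ w, eval (fun d => coeff d (nodeForm a M w j)) (lefschetzDiscriminant a M j) ≠ 0 := by
  simp only [lefschetzDiscriminant, map_prod, Finset.prod_ne_zero_iff]
  refine exists_forall_eval_coeff_ne_zero M (fun p => evalForm (node a p) j) fun i hi => ?_
  simp only [eval_gramDet]
  exact exists_det_gramMatrix_nodeForm_ne_zero ha M (by rw [Finset.mem_range] at hi; omega)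

theorem hilbFn_annIdeal_nodeForm (ha : Function.Injective a) (hM : IsLowerSet (M : Set (ℕ × ℕ)))
    {w : ℕ × ℕ → K}
    (hw : eval (fun d => coeff d (nodeForm a M w j)) (lefschetzDiscriminant a M j) ≠ 0)
    {i : ℕ} (hi : 2 * i ≤ j) :
    hilbFn (annIdeal (coeffPairing (nodeForm a M w j))) i = (truncation M i).card :=
  (hilbFn_annIdeal_nodeForm_le ha hM (show i + (j - i) = j by omega)).antisymm
    (card_truncation_le_hilbFn hw hi)

end LefschetzDiscriminant

theorem stmt17_general [Infinite K] (T : ℕ → ℕ) (j : ℕ)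
    (hGor : ∃ I : Ideal (MvPolynomial (Fin 3) K),
      IsAG I ∧ socDeg I = j ∧ ∀ i, hilbFn I i = T i) :
    ∃ P : MvPolynomial ((Fin 3) →₀ ℕ) K,
      (∃ (F : MvPolynomial (Fin 3) K) (I : Ideal (MvPolynomial (Fin 3) K)),
        F.IsHomogeneous j ∧ (∀ p, p ∈ I ↔ contract p F = 0) ∧
        (∀ i, hilbFn I i = T i) ∧ eval (fun d => coeff d F) P ≠ 0) ∧
      (∀ (F : MvPolynomial (Fin 3) K) (I : Ideal (MvPolynomial (Fin 3) K)),
        F.IsHomogeneous j → (∀ p, p ∈ I ↔ contract p F = 0) →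
        (∀ i, hilbFn I i = T i) → eval (fun d => coeff d F) P ≠ 0 →
        StrongLefschetz I) := by
  obtain ⟨I, hI, rfl, hT⟩ := hGor
  obtain ⟨g, hg, hsum⟩ := hI.exists_isPlaneOSequence
  obtain ⟨φ, hφ, rfl⟩ := hI.exists_eq_annIdeal
  set I := annIdeal φ
  set M := staircase g (socDeg I + 1)
  have hcard (i : ℕ) (hi : 2 * i ≤ socDeg I) : (truncation M i).card = hilbFn I i := by
    rw [truncation_staircase (by omega), card_staircase fun k => (hg k).1, hsum i hi]
  set a := Infinite.natEmbedding K
  refine ⟨lefschetzDiscriminant a M (socDeg I), ?_, fun F J hF hJ hJT hne => ?_⟩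
  · obtain ⟨w, hw⟩ := exists_eval_lefschetzDiscriminant_nodeForm_ne_zero a.injective M (socDeg I)
    have hF := isHomogeneous_nodeForm a M w (socDeg I)
    refine ⟨_, _, hF, fun p => contract_eq_zero_iff_mem_annIdeal.symm, fun i => ?_, hw⟩
    refine Eq.trans ((isConcentrated_coeffPairing hF).hilbFn_eq_of_forall_two_mul_le hφ
      (fun k hk => ?_) i) (hT i)
    exact (hilbFn_annIdeal_nodeForm a.injective (hg.isLowerSet_staircase _) hw hk).trans
      (hcard k hk)
  · obtain rfl : J = annIdeal (coeffPairing F) :=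
      Ideal.ext fun p => (hJ p).trans contract_eq_zero_iff_mem_annIdeal
    have hJI (i : ℕ) : hilbFn (annIdeal (coeffPairing F)) i = hilbFn I i := by rw [hJT, hT]
    exact strongLefschetz_of_eval_lefschetzDiscriminant_ne_zero hF (socDeg_congr hJI)
      (fun i hi => (hcard i hi).trans (hJI i).symm) hne

/-- assume `char K = 0` and let `T` be a codimension three Gorenstein
sequence (realized by some AG quotient of `k[x,y,z]`, of socle degree `j`). Then the
strong Lefschetz algebras form a nonempty (Zariski-)open subset of `Gor(T)`:
parametrizing `Gor(T)` by Macaulay dual generators `F ∈ S_j`, there is a polynomial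
`P` in the coefficients of `F` that is nonzero at some point of `Gor(T)`, such that
every `F` with Hilbert function `T` and `P(F) ≠ 0` yields a strong Lefschetz
algebra `R/Ann(F)`. -/
theorem stmt17 (hchar : CharZero K) (T : ℕ → ℕ) (j : ℕ)
    (hGor : ∃ I : Ideal (MvPolynomial (Fin 3) K),
      IsAG I ∧ T 1 = 3 ∧ socDeg I = j ∧ ∀ i, hilbFn I i = T i) :
    ∃ P : MvPolynomial ((Fin 3) →₀ ℕ) K,
      (∃ (F : MvPolynomial (Fin 3) K) (I : Ideal (MvPolynomial (Fin 3) K)),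
        F.IsHomogeneous j ∧ (∀ p, p ∈ I ↔ contract p F = 0) ∧
        (∀ i, hilbFn I i = T i) ∧ eval (fun d => coeff d F) P ≠ 0) ∧
      (∀ (F : MvPolynomial (Fin 3) K) (I : Ideal (MvPolynomial (Fin 3) K)),
        F.IsHomogeneous j → (∀ p, p ∈ I ↔ contract p F = 0) →
        (∀ i, hilbFn I i = T i) → eval (fun d => coeff d F) P ≠ 0 →
        StrongLefschetz I) := by
  have := CharZero.infinite K
  obtain ⟨I, hI, -, hj, hT⟩ := hGor
  exact stmt17_general T j ⟨I, hI, hj, hT⟩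
end
end

section
/- Let A' = k[x,y,z]/(f,g) be a complete intersection defined by a regular sequence with deg f = 2, deg g = 3, let h ∈ A'_{j−2} (j ≥ 6) be a nonzero element and A = A'/(h) the resulting Artinian Gorenstein complete intersection with I = (f,g,h). Let ℓ ∈ A_1 be a non-zerodivisor on A'. If q, q' ∈ A_2 both satisfy ℓ^{j−4} q = 0 and ℓ^{j−4} q' = 0 in A, then q and q' are linearly dependent (i.e., there is at most one point of P(A_2) annihilated by ℓ^{j−4}). -/
/- Common background: standard graded Artinian (Gorenstein) quotients of a
polynomial ring, their graded pieces, Hilbert function, socle degree,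
Lefschetz-type conditions, and Macaulay contraction duality. -/

noncomputable section
open MvPolynomial
open scoped Classical

variable {K : Type*} [Field K] {n : ℕ}

/- If `p` and `h` have the same degree `m` and `p = h * b` modulo a homogeneous ideal `I`, then
taking components of degree `m` replaces `b` by its component of degree zero, a scalar. So both
`l ^ k * q` and `l ^ k * q'` lie on the line through `h` modulo `I`, and the linear relation between
them descends to `q` and `q'` because `l` is a non-zerodivisor modulo `I`. -/

theorem exists_smul_add_smul_eq_zero_of_mem_span_singleton {R M : Type*} [CommRing R] [Nontrivial R]
    [AddCommGroup M] [Module R M] {x y z : M} (hx : x ∈ Submodule.span R {z})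
    (hy : y ∈ Submodule.span R {z}) :
    ∃ c c' : R, (c ≠ 0 ∨ c' ≠ 0) ∧ c • x + c' • y = 0 := by
  obtain ⟨a, rfl⟩ := Submodule.mem_span_singleton.1 hx
  obtain ⟨b, rfl⟩ := Submodule.mem_span_singleton.1 hy
  by_cases ha : a = 0
  · exact ⟨1, 0, .inl one_ne_zero, by simp [ha]⟩
  · exact ⟨b, -a, .inr (neg_ne_zero.2 ha), by module⟩

theorem isHomogeneous_span_pair {ι S A : Type*} [DecidableEq ι] [AddMonoid ι] [Semiring A]
    [SetLike S A] [AddSubmonoidClass S A] (𝒜 : ι → S) [GradedRing 𝒜] {a b : A} {i k : ι}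
    (ha : a ∈ 𝒜 i) (hb : b ∈ 𝒜 k) : (Ideal.span {a, b}).IsHomogeneous 𝒜 := by
  refine Ideal.homogeneous_span 𝒜 _ ?_
  rintro r (rfl | rfl)
  exacts [⟨i, ha⟩, ⟨k, hb⟩]

theorem sub_mul_decompose_zero_mem {ι S A : Type*} [DecidableEq ι] [AddLeftCancelMonoid ι] [Ring A]
    [SetLike S A] [AddSubgroupClass S A] (𝒜 : ι → S) [GradedRing 𝒜] {I : Ideal A}
    (hI : I.IsHomogeneous 𝒜) {m : ι} {p h b : A} (hp : p ∈ 𝒜 m) (hh : h ∈ 𝒜 m)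
    (hmem : p - h * b ∈ I) :
    p - h * (DirectSum.decompose 𝒜 b 0 : A) ∈ I := by
  have hcomp : (DirectSum.decompose 𝒜 (p - h * b) m : A) =
      p - h * (DirectSum.decompose 𝒜 b 0 : A) := by
    have hmul := DirectSum.coe_decompose_mul_add_of_left_mem 𝒜 (j := 0) (b := b) hh
    rw [add_zero] at hmul
    rw [DirectSum.decompose_sub, DirectSum.sub_apply, AddSubgroupClass.coe_sub, hmul,
      DirectSum.decompose_of_mem_same 𝒜 hp]
  exact hcomp ▸ hI m hmem

section GradedAlgebra

variable {ι R A : Type*} [DecidableEq ι] [AddLeftCancelMonoid ι] [CommRing R] [CommRing A]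
  [Algebra R A] (𝒜 : ι → Submodule R A) [GradedAlgebra 𝒜]

theorem mk_mem_span_mk_of_mem_sup_span_singleton (h𝒜 : 𝒜 0 ≤ 1) {I : Ideal A}
    (hI : I.IsHomogeneous 𝒜) {m : ι} {p h : A} (hp : p ∈ 𝒜 m) (hh : h ∈ 𝒜 m)
    (hmem : p ∈ I ⊔ Ideal.span {h}) :
    Ideal.Quotient.mk I p ∈ Submodule.span R {Ideal.Quotient.mk I h} := by
  obtain ⟨r, hr, _, hb, rfl⟩ := Submodule.mem_sup.1 hmem
  obtain ⟨b, rfl⟩ := Ideal.mem_span_singleton.1 hb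
  obtain ⟨c, hc⟩ := Submodule.mem_one.1 (h𝒜 (DirectSum.decompose 𝒜 b 0).2)
  have hsub := sub_mul_decompose_zero_mem 𝒜 hI hp hh (b := b) (by simpa using hr)
  rw [← hc, ← Algebra.commutes, ← Algebra.smul_def] at hsub
  exact Submodule.mem_span_singleton.2 ⟨c, (Ideal.Quotient.eq.2 hsub).symm⟩

theorem stmt18_general [Nontrivial R] (h𝒜 : 𝒜 0 ≤ 1) {I : Ideal A} (hI : I.IsHomogeneous 𝒜)
    {e d : ι} {k : ℕ} {h l q q' : A} (hh : h ∈ 𝒜 (k • e + d)) (hl : l ∈ 𝒜 e)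
    (hlreg : IsSMulRegular (A ⧸ I) l) (hq : q ∈ 𝒜 d) (hq' : q' ∈ 𝒜 d)
    (hq1 : l ^ k * q ∈ I ⊔ Ideal.span {h}) (hq2 : l ^ k * q' ∈ I ⊔ Ideal.span {h}) :
    ∃ c c' : R, (c ≠ 0 ∨ c' ≠ 0) ∧ c • q + c' • q' ∈ I := by
  have hline {r : A} (hr : r ∈ 𝒜 d) (hmem : l ^ k * r ∈ I ⊔ Ideal.span {h}) :
      Ideal.Quotient.mk I (l ^ k * r) ∈ Submodule.span R {Ideal.Quotient.mk I h} :=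
    mk_mem_span_mk_of_mem_sup_span_singleton 𝒜 h𝒜 hI
      (SetLike.mul_mem_graded (SetLike.pow_mem_graded k hl) hr) hh hmem
  obtain ⟨c, c', hc, hrel⟩ :=
    exists_smul_add_smul_eq_zero_of_mem_span_singleton (hline hq hq1) (hline hq' hq2)
  have hmem : l ^ k • (c • q + c' • q') ∈ I := by
    rw [smul_eq_mul, mul_add, mul_smul_comm, mul_smul_comm]
    exact Ideal.Quotient.eq_zero_iff_mem.1 hrel
  exact ⟨c, c', hc, mem_of_isSMulRegular_quotient_of_smul_mem (hlreg.pow k) hmem⟩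

end GradedAlgebra

/-- let `A' = k[x,y,z]/(f,g)` be a complete intersection with
`deg f = 2`, `deg g = 3`, let `h` be homogeneous of degree `j - 2` (`j ≥ 6`) with
`h ∉ (f,g)`, and `A = k[x,y,z]/(f,g,h)`. Let `ℓ` be a linear form that is a
non-zerodivisor on `A'`. If `q, q' ∈ A_2` both satisfy `ℓ^{j-4} q = 0` and
`ℓ^{j-4} q' = 0` in `A`, then `q` and `q'` are linearly dependent in `A`. -/
theorem stmt18 (f g h l q q' : MvPolynomial (Fin 3) K) (j : ℕ) (hj : 6 ≤ j)
    (hf : f.IsHomogeneous 2) (hg : g.IsHomogeneous 3) (hh : h.IsHomogeneous (j - 2))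
    (hl : l.IsHomogeneous 1)
    (hf0 : f ≠ 0) (hreg : ∀ p, g * p ∈ Ideal.span {f} → p ∈ Ideal.span {f})
    (hhne : h ∉ Ideal.span {f, g}) (hh0 : h ≠ 0)
    (hlreg : ∀ b : MvPolynomial (Fin 3) K ⧸ Ideal.span {f, g},
      Ideal.Quotient.mk (Ideal.span {f, g}) l * b = 0 → b = 0)
    (hq : q.IsHomogeneous 2) (hq' : q'.IsHomogeneous 2)
    (hq1 : l ^ (j - 4) * q ∈ Ideal.span {f, g, h})
    (hq2 : l ^ (j - 4) * q' ∈ Ideal.span {f, g, h}) :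
    ∃ c c' : K, (c ≠ 0 ∨ c' ≠ 0) ∧ c • q + c' • q' ∈ Ideal.span {f, g, h} := by
  let _ := gradedAlgebra (σ := Fin 3) (R := K)
  have hspan : Ideal.span {f, g, h} = Ideal.span {f, g} ⊔ Ideal.span {h} := by
    simp only [Ideal.span_insert, sup_assoc]
  have hdeg : (j - 4) • 1 + 2 = j - 2 := by rw [smul_eq_mul]; omega
  rw [hspan] at hq1 hq2 ⊢
  obtain ⟨c, c', hc, hmem⟩ := stmt18_general (homogeneousSubmodule (Fin 3) K)
    (homogeneousSubmodule_zero _).le (isHomogeneous_span_pair _ hf hg) (hdeg ▸ hh) hl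
    (.of_right_eq_zero_of_smul hlreg) hq hq' hq1 hq2
  exact ⟨c, c', hc, Ideal.mem_sup_left hmem⟩
end
end
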